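/- arXiv:2407.17680 — 4 statements merged into one kernel-verified Lean document; each statement's English description precedes it below -/
import Mathlib

section
/- There exist constants c₁, c₂ > 0 such that for all sufficiently large X, c₁ · X² · log log X ≤ Σ_{r ∈ ℚ, h(r) ≤ X} ω(den(r)) ≤ c₂ · X² · log log X, where the sum is over all rational numbers r of height at most X and den(r) denotes the (positive) denominator of r in lowest terms. -/
/-- The height of a rational number `a/b` in lowest terms: `max(|a|, b)`. -/
def ratHeight (r : ℚ) : ℕ := max r.num.natAbs r.den

/-!
Exchanging the order of summation, the sum of `ω(den r)` over the rationals of height at most `N`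
is `∑ p ≤ N, #{r | p ∣ den r}`. The fractions counted by a given `p` embed into the pairs
`(num r, den r)` with `p ∣ den r`, so there are at most `(2N + 1) · N / p` of them. Conversely they
include `a / (p m)` for all `a ≤ N`, `m ≤ N / p` with `a` coprime to `p m`. As
`∑ p, 1 / p ^ 2 ≤ 3 / 4 < 1`, a positive proportion of the pairs `(a, m)` is coprime, which leaves
at least `N ^ 2 / (8 p) - N ^ 2 / p ^ 2` of them. It remains to see that `∑ p ≤ N, 1 / p` has order
`log log N`: the lower bound follows from the Euler product of the harmonic sum, the upper bound
from Chebyshev's estimate for `θ` on dyadic intervals.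
-/

section

open Finset

/-- The sum `∑ p ≤ n, 1 / p` over primes, whose order of growth is the content of Mertens' second
theorem. -/
noncomputable def primeReciprocalSum (n : ℕ) : ℝ := ∑ p ∈ Nat.primesLE n, (p : ℝ)⁻¹

lemma primeReciprocalSum_mono : Monotone primeReciprocalSum := fun _ _ h ↦
  sum_le_sum_of_subset_of_nonneg (Nat.primesLE_mono h) fun _ _ _ ↦ by positivity

lemma harmonic_le_prod_primesLE (n : ℕ) :
    (harmonic n : ℝ) ≤ ∏ p ∈ Nat.primesLE n, (1 - (p : ℝ)⁻¹)⁻¹ := by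
  let f : ℕ →* ℝ := (invMonoidWithZeroHom : ℝ →*₀ ℝ).toMonoidHom.comp (Nat.castRingHom ℝ)
  have f_apply (m : ℕ) : f m = (m : ℝ)⁻¹ := rfl
  have norm_f_lt_one {p : ℕ} (hp : p.Prime) : ‖f p‖ < 1 := by
    rw [f_apply, norm_inv, Real.norm_natCast]
    exact inv_lt_one_of_one_lt₀ (mod_cast hp.one_lt)
  have euler_product : HasSum ((Nat.smoothNumbers (n + 1)).indicator f)
      (∏ p ∈ Nat.primesLE n, (1 - (p : ℝ)⁻¹)⁻¹) :=
    hasSum_subtype_iff_indicator.1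
      (EulerProduct.summable_and_hasSum_smoothNumbers_prod_primesBelow_geometric
        norm_f_lt_one (n + 1)).2
  have smooth {m : ℕ} (hm : m ∈ Icc 1 n) : m ∈ Nat.smoothNumbers (n + 1) :=
    Nat.mem_smoothNumbers_of_lt (mem_Icc.1 hm).1 (Nat.lt_succ_of_le (mem_Icc.1 hm).2)
  calc (harmonic n : ℝ) = ∑ m ∈ Icc 1 n, (Nat.smoothNumbers (n + 1)).indicator f m := by
        rw [harmonic_eq_sum_Icc]
        push_cast
        exact sum_congr rfl fun m hm ↦ (Set.indicator_of_mem (smooth hm) f).symm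
    _ ≤ _ := sum_le_hasSum _ (fun m _ ↦ Set.indicator_nonneg (fun k _ ↦ by simp [f_apply]) m)
        euler_product

lemma inv_one_sub_le_exp_two_mul {x : ℝ} (h₀ : 0 ≤ x) (h : x ≤ 1 / 2) :
    (1 - x)⁻¹ ≤ Real.exp (2 * x) := by
  refine le_trans ?_ (Real.add_one_le_exp (2 * x))
  rw [inv_le_iff_one_le_mul₀ (by linarith)]
  nlinarith

lemma harmonic_le_exp_two_mul_primeReciprocalSum (n : ℕ) :
    (harmonic n : ℝ) ≤ Real.exp (2 * primeReciprocalSum n) := by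
  have inv_le_half {p : ℕ} (hp : p ∈ Nat.primesLE n) : (p : ℝ)⁻¹ ≤ 1 / 2 := by
    rw [one_div]
    exact inv_anti₀ two_pos (mod_cast Nat.two_le_of_mem_primesLE hp)
  refine (harmonic_le_prod_primesLE n).trans ?_
  rw [primeReciprocalSum, mul_sum, Real.exp_sum]
  refine prod_le_prod (fun p hp ↦ ?_) fun p hp ↦
    inv_one_sub_le_exp_two_mul (by positivity) (inv_le_half hp)
  exact inv_nonneg.2 (by linarith [inv_le_half hp])

theorem log_log_le_two_mul_primeReciprocalSum {x : ℝ} (hx : 1 < x) :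
    Real.log (Real.log x) ≤ 2 * primeReciprocalSum ⌊x⌋₊ :=
  (Real.log_le_iff_le_exp (Real.log_pos hx)).2 <|
    (log_le_harmonic_floor x (by linarith)).trans (harmonic_le_exp_two_mul_primeReciprocalSum _)

lemma primeReciprocalSum_sub_le {m n : ℕ} (hm : 1 < m) (hmn : m ≤ n) :
    primeReciprocalSum n - primeReciprocalSum m ≤ Real.log 4 * n / (m * Real.log m) := by
  have log_m_pos : 0 < Real.log m := Real.log_pos (mod_cast hm)
  have m_pos : (0 : ℝ) < m := by positivity
  have inv_le {p : ℕ} (hp : p ∈ Nat.primesLE n \ Nat.primesLE m) :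
      (p : ℝ)⁻¹ ≤ Real.log p / (m * Real.log m) := by
    have hmp : (m : ℝ) ≤ p := by
      simp only [Finset.mem_sdiff, Nat.mem_primesLE] at hp
      exact_mod_cast (by grind : m ≤ p)
    rw [inv_eq_one_div, div_le_div_iff₀ (m_pos.trans_le hmp) (by positivity), one_mul, mul_comm]
    gcongr
  calc primeReciprocalSum n - primeReciprocalSum m
      = ∑ p ∈ Nat.primesLE n \ Nat.primesLE m, (p : ℝ)⁻¹ := by
        rw [sub_eq_iff_eq_add, primeReciprocalSum, primeReciprocalSum,
          sum_sdiff (Nat.primesLE_mono hmn)]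
    _ ≤ ∑ p ∈ Nat.primesLE n \ Nat.primesLE m, Real.log p / (m * Real.log m) :=
        sum_le_sum fun _ ↦ inv_le
    _ ≤ ∑ p ∈ Nat.primesLE n, Real.log p / (m * Real.log m) :=
        sum_le_sum_of_subset_of_nonneg sdiff_subset fun p _ _ ↦
          div_nonneg (Real.log_natCast_nonneg p) (by positivity)
    _ = Chebyshev.theta n / (m * Real.log m) := by
        rw [← sum_div, Chebyshev.theta_eq_sum_primesLE_log]
    _ ≤ _ := by
        gcongr
        exact Chebyshev.theta_le_log4_mul_x n.cast_nonneg

lemma primeReciprocalSum_two_pow_le (k : ℕ) :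
    primeReciprocalSum (2 ^ (k + 1)) ≤ 1 / 2 + 4 * harmonic k := by
  induction k with
  | zero =>
    have : Nat.primesLE 2 = {2} := by decide
    simp [primeReciprocalSum, this]
  | succ k ih =>
    have dyadic_block : primeReciprocalSum (2 ^ (k + 2)) - primeReciprocalSum (2 ^ (k + 1)) ≤
        4 * ((k : ℝ) + 1)⁻¹ := by
      refine (primeReciprocalSum_sub_le (Nat.one_lt_two_pow k.succ_ne_zero)
        (Nat.pow_le_pow_right two_pos (Nat.le_succ _))).trans_eq ?_
      have log_four : Real.log 4 = 2 * Real.log 2 := by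
        rw [show (4 : ℝ) = 2 ^ 2 by norm_num, Real.log_pow]
        norm_num
      have log_two_ne : Real.log 2 ≠ 0 := (Real.log_pos one_lt_two).ne'
      have succ_ne : (k : ℝ) + 1 ≠ 0 := by positivity
      push_cast
      rw [log_four, Real.log_pow, pow_succ _ (k + 1)]
      push_cast
      field_simp
      norm_num
    rw [harmonic_succ]
    push_cast
    linarith

theorem primeReciprocalSum_le_log_log {x : ℝ} (hx : 2 ≤ x) :
    primeReciprocalSum ⌊x⌋₊ ≤ 4 * Real.log (Real.log x) + 9 := by
  set k := Nat.log 2 ⌊x⌋₊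
  have two_le_floor : 2 ≤ ⌊x⌋₊ := Nat.le_floor (mod_cast hx)
  have k_pos : 0 < k := Nat.log_pos one_lt_two two_le_floor
  have log_two_pos : 0 < Real.log 2 := Real.log_pos one_lt_two
  have log_x_pos : 0 < Real.log x := Real.log_pos (by linarith)
  have k_le : (k : ℝ) ≤ Real.log x / Real.log 2 :=
    (Real.natLog_le_logb _ _).trans <| by
      rw [Nat.cast_ofNat, Real.logb]
      gcongr
      exact Nat.floor_le (by linarith)
  have log_k_le : Real.log k ≤ Real.log (Real.log x) + 1 := calc
    Real.log k ≤ Real.log (Real.log x / Real.log 2) :=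
        Real.log_le_log (mod_cast k_pos) k_le
    _ = Real.log (Real.log x) - Real.log (Real.log 2) :=
        Real.log_div log_x_pos.ne' log_two_pos.ne'
    _ ≤ Real.log (Real.log x) + 1 := by
        have : (Real.log 2)⁻¹ ≤ 2 := inv_le_of_inv_le₀ two_pos (by linarith [Real.log_two_gt_d9])
        linarith [Real.one_sub_inv_le_log_of_pos log_two_pos]
  calc primeReciprocalSum ⌊x⌋₊ ≤ primeReciprocalSum (2 ^ (k + 1)) :=
        primeReciprocalSum_mono (Nat.lt_pow_succ_log_self one_lt_two _).le
    _ ≤ 1 / 2 + 4 * harmonic k := primeReciprocalSum_two_pow_le k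
    _ ≤ 1 / 2 + 4 * (1 + Real.log k) := by
        gcongr
        exact harmonic_le_one_add_log k
    _ ≤ _ := by linarith

lemma sum_primesLE_inv_sq_le (n : ℕ) : ∑ p ∈ Nat.primesLE n, ((p : ℝ) ^ 2)⁻¹ ≤ 3 / 4 := by
  have subset : Nat.primesLE n ⊆ insert 2 (Ioc 2 (n + 2)) := fun p hp ↦ by
    simp only [Nat.mem_primesLE, mem_insert, mem_Ioc] at hp ⊢
    have := hp.2.two_le
    lia
  calc ∑ p ∈ Nat.primesLE n, ((p : ℝ) ^ 2)⁻¹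
      ≤ ∑ k ∈ insert 2 (Ioc 2 (n + 2)), ((k : ℝ) ^ 2)⁻¹ :=
        sum_le_sum_of_subset_of_nonneg subset fun _ _ _ ↦ by positivity
    _ = 1 / 4 + ∑ k ∈ Ioc 2 (n + 2), ((k : ℝ) ^ 2)⁻¹ := by
        rw [sum_insert (by simp)]
        norm_num
    _ ≤ 1 / 4 + ((2 : ℕ) : ℝ)⁻¹ := by
        gcongr
        exact (sum_Ioc_inv_sq_le_sub two_ne_zero (Nat.le_add_left 2 n)).trans
          (sub_le_self _ (by positivity))
    _ = 3 / 4 := by norm_num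

lemma card_filter_not_coprime_le (m n : ℕ) :
    (#{x ∈ Ioc 0 m ×ˢ Ioc 0 n | ¬ x.1.Coprime x.2} : ℝ) ≤ 3 / 4 * (m * n) := by
  have subset : {x ∈ Ioc 0 m ×ˢ Ioc 0 n | ¬ x.1.Coprime x.2} ⊆
      (Nat.primesLE m).biUnion fun q ↦ {a ∈ Ioc 0 m | q ∣ a} ×ˢ {b ∈ Ioc 0 n | q ∣ b} := by
    intro x hx
    simp only [mem_filter, mem_product, mem_Ioc, mem_biUnion, Nat.mem_primesLE] at hx ⊢
    obtain ⟨q, hq, hq₁, hq₂⟩ := Nat.Prime.not_coprime_iff_dvd.1 hx.2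
    have := Nat.le_of_dvd hx.1.1.1 hq₁
    exact ⟨q, ⟨this.trans hx.1.1.2, hq⟩, ⟨hx.1.1, hq₁⟩, hx.1.2, hq₂⟩
  have card_le : #{x ∈ Ioc 0 m ×ˢ Ioc 0 n | ¬ x.1.Coprime x.2} ≤
      ∑ q ∈ Nat.primesLE m, (m / q) * (n / q) := by
    refine (card_le_card subset).trans (card_biUnion_le.trans_eq ?_)
    simp only [card_product, Nat.Ioc_filter_dvd_card_eq_div]
  calc (#{x ∈ Ioc 0 m ×ˢ Ioc 0 n | ¬ x.1.Coprime x.2} : ℝ)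
      ≤ ∑ q ∈ Nat.primesLE m, ((m / q : ℕ) : ℝ) * (n / q : ℕ) := mod_cast card_le
    _ ≤ ∑ q ∈ Nat.primesLE m, (m / q : ℝ) * (n / q) := by gcongr <;> exact Nat.cast_div_le
    _ = (∑ q ∈ Nat.primesLE m, ((q : ℝ) ^ 2)⁻¹) * (m * n) := by
        rw [sum_mul]
        exact sum_congr rfl fun q _ ↦ by ring
    _ ≤ _ := by
        gcongr
        exact sum_primesLE_inv_sq_le m

lemma le_card_filter_coprime_mul {p : ℕ} (hp : p.Prime) (m n : ℕ) :
    (1 / 4 - (p : ℝ)⁻¹) * (m * n) ≤ #{x ∈ Ioc 0 m ×ˢ Ioc 0 n | x.1.Coprime (p * x.2)} := by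
  have subset : Ioc 0 m ×ˢ Ioc 0 n ⊆ {x ∈ Ioc 0 m ×ˢ Ioc 0 n | x.1.Coprime (p * x.2)} ∪
      ({x ∈ Ioc 0 m ×ˢ Ioc 0 n | ¬ x.1.Coprime x.2} ∪ {a ∈ Ioc 0 m | p ∣ a} ×ˢ Ioc 0 n) := by
    intro x hx
    have := Nat.coprime_comm.trans (hp.coprime_iff_not_dvd (n := x.1))
    simp only [mem_union, mem_filter, mem_product, Nat.coprime_mul_iff_right] at hx ⊢
    tauto
  have card_le : m * n ≤ #{x ∈ Ioc 0 m ×ˢ Ioc 0 n | x.1.Coprime (p * x.2)} +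
      (#{x ∈ Ioc 0 m ×ˢ Ioc 0 n | ¬ x.1.Coprime x.2} + m / p * n) := by
    have := (card_le_card subset).trans <| (card_union_le _ _).trans <|
      Nat.add_le_add_left (card_union_le _ _) _
    simpa only [card_product, Nat.card_Ioc, Nat.Ioc_filter_dvd_card_eq_div, Nat.sub_zero]
      using this
  have card_le_real : (m * n : ℝ) ≤ #{x ∈ Ioc 0 m ×ˢ Ioc 0 n | x.1.Coprime (p * x.2)} +
      (#{x ∈ Ioc 0 m ×ˢ Ioc 0 n | ¬ x.1.Coprime x.2} + (m / p : ℕ) * n) := mod_cast card_le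
  have card_dvd_le : ((m / p : ℕ) : ℝ) * n ≤ (p : ℝ)⁻¹ * (m * n) := calc
    ((m / p : ℕ) : ℝ) * n ≤ m / p * n := by gcongr; exact Nat.cast_div_le
    _ = _ := by ring
  linarith [card_filter_not_coprime_le m n]

lemma sum_card_primeFactors_eq {ι : Type*} {s : Finset ι} {f : ι → ℕ} {n : ℕ}
    (hf : ∀ i ∈ s, f i ∈ Ioc 0 n) :
    ∑ i ∈ s, #(f i).primeFactors = ∑ p ∈ Nat.primesLE n, #{i ∈ s | p ∣ f i} := by
  have primeFactors_eq {i : ι} (hi : i ∈ s) :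
      (f i).primeFactors = {p ∈ Nat.primesLE n | p ∣ f i} := by
    obtain ⟨f_pos, f_le⟩ := mem_Ioc.1 (hf i hi)
    ext p
    have := Nat.le_of_dvd (m := p) f_pos
    simp only [Nat.mem_primeFactors, mem_filter, Nat.mem_primesLE]
    grind
  rw [sum_congr rfl fun i hi ↦ congrArg card (primeFactors_eq hi)]
  exact sum_card_bipartiteAbove_eq_sum_card_bipartiteBelow fun i p ↦ p ∣ f i

lemma ratHeight_le_iff {r : ℚ} {n : ℕ} :
    ratHeight r ≤ n ↔ r.num ∈ Icc (-n : ℤ) n ∧ r.den ∈ Ioc 0 n := by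
  have := r.den_pos
  simp only [ratHeight, mem_Icc, mem_Ioc]
  lia

lemma rat_num_den_injective : Function.Injective fun r : ℚ ↦ (r.num, r.den) :=
  fun _ _ h ↦ Rat.ext (congrArg Prod.fst h) (congrArg Prod.snd h)

lemma finite_setOf_ratHeight_le (n : ℕ) : {r : ℚ | ratHeight r ≤ n}.Finite :=
  Set.Finite.of_injOn (fun _ hr ↦ mem_coe.2 (mem_product.2 (ratHeight_le_iff.1 hr)))
    rat_num_den_injective.injOn (Icc (-n : ℤ) n ×ˢ Ioc 0 n).finite_toSet

/-- The finite set of rational numbers of height at most `n`. -/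
noncomputable def ratsOfHeightLE (n : ℕ) : Finset ℚ := (finite_setOf_ratHeight_le n).toFinset

lemma mem_ratsOfHeightLE {r : ℚ} {n : ℕ} : r ∈ ratsOfHeightLE n ↔ ratHeight r ≤ n := by
  simp [ratsOfHeightLE]

lemma finsum_mem_ratHeight_le {M : Type*} [AddCommMonoid M] (f : ℚ → M) {x : ℝ} (hx : 0 ≤ x) :
    ∑ᶠ r ∈ {r : ℚ | (ratHeight r : ℝ) ≤ x}, f r = ∑ r ∈ ratsOfHeightLE ⌊x⌋₊, f r := by
  rw [← finsum_mem_coe_finset]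
  congr! 3 with r
  simp [mem_ratsOfHeightLE, Nat.le_floor_iff hx]

lemma sum_card_primeFactors_den_eq (n : ℕ) :
    ∑ r ∈ ratsOfHeightLE n, #r.den.primeFactors =
      ∑ p ∈ Nat.primesLE n, #{r ∈ ratsOfHeightLE n | p ∣ r.den} :=
  sum_card_primeFactors_eq fun _ hr ↦ (ratHeight_le_iff.1 (mem_ratsOfHeightLE.1 hr)).2

lemma card_filter_dvd_den_le (n p : ℕ) :
    #{r ∈ ratsOfHeightLE n | p ∣ r.den} ≤ (2 * n + 1) * (n / p) := calc
  #{r ∈ ratsOfHeightLE n | p ∣ r.den} ≤ #(Icc (-n : ℤ) n ×ˢ {b ∈ Ioc 0 n | p ∣ b}) := by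
    refine card_le_card_of_injOn _ (fun r hr ↦ ?_) rat_num_den_injective.injOn
    obtain ⟨hr, hp⟩ := mem_filter.1 hr
    obtain ⟨hnum, hden⟩ := ratHeight_le_iff.1 (mem_ratsOfHeightLE.1 hr)
    exact mem_product.2 ⟨hnum, mem_filter.2 ⟨hden, hp⟩⟩
  _ = (2 * n + 1) * (n / p) := by
    rw [card_product, Int.card_Icc, Nat.Ioc_filter_dvd_card_eq_div]
    congr 1
    lia

lemma card_filter_coprime_mul_le {p : ℕ} (hp : 0 < p) (n : ℕ) :
    #{x ∈ Ioc 0 n ×ˢ Ioc 0 (n / p) | x.1.Coprime (p * x.2)} ≤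
      #{r ∈ ratsOfHeightLE n | p ∣ r.den} := by
  refine card_le_card_of_surjOn (fun r ↦ (r.num.natAbs, r.den / p)) fun ⟨a, m⟩ hx ↦ ?_
  simp only [coe_filter, mem_product, mem_Ioc, Set.mem_ofPred_eq] at hx
  obtain ⟨⟨⟨-, ha⟩, hm₀, hm⟩, hcop⟩ := hx
  have pm_le : p * m ≤ n := (Nat.mul_le_mul_left p hm).trans (Nat.mul_div_le n p)
  let r : ℚ := ⟨a, p * m, (Nat.mul_pos hp hm₀).ne', hcop⟩
  refine ⟨r, mem_coe.2 (mem_filter.2 ⟨mem_ratsOfHeightLE.2 ?_, dvd_mul_right p m⟩), ?_⟩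
  · exact max_le ha pm_le
  · exact Prod.ext (Int.natAbs_natCast a) (Nat.mul_div_cancel_left m hp)

lemma le_card_filter_dvd_den {p n : ℕ} (hp : p.Prime) (hpn : p ≤ n) :
    (n : ℝ) ^ 2 * ((p : ℝ)⁻¹ / 8 - ((p : ℝ) ^ 2)⁻¹) ≤ #{r ∈ ratsOfHeightLE n | p ∣ r.den} := by
  have p_pos : (0 : ℝ) < p := mod_cast hp.pos
  have le_quotient : (n : ℝ) / p / 2 ≤ (n / p : ℕ) := by
    rw [← Nat.floor_div_eq_div (K := ℝ)]
    exact (Nat.div_two_lt_floor ((one_le_div₀ p_pos).2 (mod_cast hpn))).le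
  have quotient_le : ((n / p : ℕ) : ℝ) ≤ n / p := Nat.cast_div_le
  calc (n : ℝ) ^ 2 * ((p : ℝ)⁻¹ / 8 - ((p : ℝ) ^ 2)⁻¹)
      = 1 / 4 * (n * (n / p / 2)) - (p : ℝ)⁻¹ * (n * (n / p)) := by ring
    _ ≤ 1 / 4 * (n * (n / p : ℕ)) - (p : ℝ)⁻¹ * (n * (n / p : ℕ)) := by gcongr
    _ = (1 / 4 - (p : ℝ)⁻¹) * (n * (n / p : ℕ)) := by ring
    _ ≤ #{x ∈ Ioc 0 n ×ˢ Ioc 0 (n / p) | x.1.Coprime (p * x.2)} :=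
        le_card_filter_coprime_mul hp n (n / p)
    _ ≤ #{r ∈ ratsOfHeightLE n | p ∣ r.den} := mod_cast card_filter_coprime_mul_le hp.pos n

theorem sum_card_primeFactors_den_le (n : ℕ) :
    ∑ r ∈ ratsOfHeightLE n, (#r.den.primeFactors : ℝ) ≤
      (2 * n + 1) * n * primeReciprocalSum n := calc
  ∑ r ∈ ratsOfHeightLE n, (#r.den.primeFactors : ℝ)
    = ∑ p ∈ Nat.primesLE n, (#{r ∈ ratsOfHeightLE n | p ∣ r.den} : ℝ) :=
      mod_cast sum_card_primeFactors_den_eq n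
  _ ≤ ∑ p ∈ Nat.primesLE n, (2 * n + 1 : ℝ) * (n / p : ℕ) :=
      sum_le_sum fun p _ ↦ mod_cast card_filter_dvd_den_le n p
  _ ≤ ∑ p ∈ Nat.primesLE n, (2 * n + 1 : ℝ) * (n / p) := by
      gcongr
      exact Nat.cast_div_le
  _ = (2 * n + 1) * n * primeReciprocalSum n := by
      simp only [primeReciprocalSum, mul_sum, div_eq_mul_inv, mul_assoc]

theorem le_sum_card_primeFactors_den (n : ℕ) :
    (n : ℝ) ^ 2 / 8 * (primeReciprocalSum n - 6) ≤
      ∑ r ∈ ratsOfHeightLE n, (#r.den.primeFactors : ℝ) := calc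
  (n : ℝ) ^ 2 / 8 * (primeReciprocalSum n - 6)
    = (n : ℝ) ^ 2 * (primeReciprocalSum n / 8 - 3 / 4) := by ring
  _ ≤ (n : ℝ) ^ 2 * (primeReciprocalSum n / 8 - ∑ p ∈ Nat.primesLE n, ((p : ℝ) ^ 2)⁻¹) := by
      gcongr
      exact sum_primesLE_inv_sq_le n
  _ = ∑ p ∈ Nat.primesLE n, (n : ℝ) ^ 2 * ((p : ℝ)⁻¹ / 8 - ((p : ℝ) ^ 2)⁻¹) := by
      rw [primeReciprocalSum, sum_div, ← sum_sub_distrib, mul_sum]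
  _ ≤ ∑ p ∈ Nat.primesLE n, (#{r ∈ ratsOfHeightLE n | p ∣ r.den} : ℝ) :=
      sum_le_sum fun p hp ↦
        le_card_filter_dvd_den (Nat.prime_of_mem_primesLE hp) (Nat.le_of_mem_primesLE hp)
  _ = ∑ r ∈ ratsOfHeightLE n, (#r.den.primeFactors : ℝ) :=
      mod_cast (sum_card_primeFactors_den_eq n).symm

end

theorem sum_omega_denominator_asymptotics :
    ∃ c₁ c₂ : ℝ, 0 < c₁ ∧ 0 < c₂ ∧ ∃ X₀ : ℝ, ∀ X : ℝ, X₀ ≤ X →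
      c₁ * X ^ 2 * Real.log (Real.log X) ≤
        (∑ᶠ r ∈ {r : ℚ | (ratHeight r : ℝ) ≤ X}, (r.den.primeFactors.card : ℝ)) ∧
      (∑ᶠ r ∈ {r : ℚ | (ratHeight r : ℝ) ≤ X}, (r.den.primeFactors.card : ℝ)) ≤
        c₂ * X ^ 2 * Real.log (Real.log X) := by
  obtain ⟨X₀, hX₀⟩ := Filter.eventually_atTop.1 <| (Filter.eventually_ge_atTop (2 : ℝ)).and <|
    (Real.tendsto_log_atTop.comp Real.tendsto_log_atTop).eventually_ge_atTop 24
  refine ⟨1 / 128, 15, by norm_num, by norm_num, X₀, fun X hX ↦ ?_⟩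
  obtain ⟨two_le_X, hL : 24 ≤ Real.log (Real.log X)⟩ := hX₀ X hX
  rw [finsum_mem_ratHeight_le _ (by linarith)]
  set L := Real.log (Real.log X)
  set N := ⌊X⌋₊
  have le_P : L ≤ 2 * primeReciprocalSum N := log_log_le_two_mul_primeReciprocalSum (by linarith)
  have P_le : primeReciprocalSum N ≤ 4 * L + 9 := primeReciprocalSum_le_log_log two_le_X
  have le_N : X / 2 ≤ N := (Nat.div_two_lt_floor (by linarith)).le
  have N_le : (N : ℝ) ≤ X := Nat.floor_le (by linarith)
  constructor
  · calc 1 / 128 * X ^ 2 * L = (X / 2) ^ 2 / 8 * (L / 4) := by ring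
      _ ≤ (N : ℝ) ^ 2 / 8 * (primeReciprocalSum N - 6) := by gcongr; linarith
      _ ≤ _ := le_sum_card_primeFactors_den N
  · calc _ ≤ (2 * N + 1) * N * primeReciprocalSum N := sum_card_primeFactors_den_le N
      _ ≤ (3 * X) * X * (5 * L) := by gcongr <;> linarith
      _ = 15 * X ^ 2 * L := by ring
end

section
/- There exist constants c₁, c₂ > 0 such that for all sufficiently large X, c₁·X² ≤ #{(A,B) ∈ ℤ² : 4A³ + 27B² ≠ 0, for every prime p (p⁴ ∣ A implies p⁶ ∤ B), max(|A|³, |B|²) ≤ X⁶, and the elliptic curve E_{A,B}: y² = x³ + Ax + B has a rational point of order 3} ≤ c₂·X². -/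
/-- The elliptic curve `y² = x³ + Ax + B` over `ℚ`. -/
noncomputable def EAB (A B : ℤ) : WeierstrassCurve.Affine ℚ :=
  { a₁ := 0, a₂ := 0, a₃ := 0, a₄ := (A : ℚ), a₆ := (B : ℚ) }

/-!
A point `(x, y)` of a plane cubic has order three iff it is a flex, i.e. its tangent line meets the
curve only there. On `y² = x³ + Ax + B`, writing `3u` for the slope of this line and `v = y`, the
condition reads `x = 3u²`, `A = 6uv - 27u⁴`, `B = v² - 18u³v + 54u⁶`. For integral `A` and `B`, both
`u` and `v` are integers. Since `A` and `B` are weighted homogeneous of degrees `4` and `6` for the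
weights `1` and `3` of `u` and `v`, height at most `s²` amounts, up to constants, to `|u| ≤ s` and
`|v| ≤ s³`, a box with about `s⁴` integral points; this is the upper bound. From below, the pairs
with `v` coprime to `3u` have positive density in the box and give coprime, hence minimal, `(A, B)`;
and `(A, B)` determines `(u, v)` up to sign, because a real elliptic curve has only two points of
order three.
-/

section Coefficients

variable {R : Type*} [CommRing R]

/-- The coefficient `A` of the curve `y² = x³ + Ax + B` on which `(3u², v)` is a flex with tangent
slope `3u`. -/
def flexA (u v : R) : R := 6 * u * v - 27 * u ^ 4

/-- The coefficient `B` of the curve `y² = x³ + Ax + B` on which `(3u², v)` is a flex with tangent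
slope `3u`. -/
def flexB (u v : R) : R := v ^ 2 - 18 * u ^ 3 * v + 54 * u ^ 6

@[simp, norm_cast]
lemma intCast_flexA (u v : ℤ) : ((flexA u v : ℤ) : R) = flexA (u : R) v := by
  simp [flexA]

@[simp, norm_cast]
lemma intCast_flexB (u v : ℤ) : ((flexB u v : ℤ) : R) = flexB (u : R) v := by
  simp [flexB]

lemma sq_eq_flex_cubic (u v : R) :
    v ^ 2 = (3 * u ^ 2) ^ 3 + flexA u v * (3 * u ^ 2) + flexB u v := by
  simp only [flexA, flexB]; ring

-- This is `ψ₃(3u²) = 0` for the 3-division polynomial `ψ₃ = 3x⁴ + 6Ax² + 12Bx - A²`.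
lemma flex_divisionPolynomial (u v : R) :
    243 * (u ^ 2) ^ 4 + 54 * flexA u v * (u ^ 2) ^ 2 + 36 * flexB u v * u ^ 2 = flexA u v ^ 2 := by
  simp only [flexA, flexB]; ring

lemma flex_discriminant (u v : R) :
    4 * flexA u v ^ 3 + 27 * flexB u v ^ 2 = 27 * v ^ 3 * (v - 4 * u ^ 3) := by
  simp only [flexA, flexB]; ring

lemma isCoprime_flexA_flexB {u v : R} (huv : IsCoprime u v) (h3v : IsCoprime 3 v) :
    IsCoprime (flexA u v) (flexB u v) := by
  have hu : IsCoprime u (flexB u v) := by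
    have h := (huv.pow_right (n := 2)).add_mul_left_right (54 * u ^ 5 - 18 * u ^ 2 * v)
    convert h using 1
    simp only [flexB]; ring
  have h3 : IsCoprime 3 (flexB u v) := by
    have h := (h3v.pow_right (n := 2)).add_mul_left_right (18 * u ^ 6 - 6 * u ^ 3 * v)
    convert h using 1
    simp only [flexB]; ring
  have hw : IsCoprime (2 * v - 9 * u ^ 3) (flexB u v) := by
    have h : IsCoprime (3 ^ 3 * u ^ 6 + flexB u v * 4) (flexB u v) :=
      (h3.pow_left.mul_left hu.pow_left).add_mul_left_left 4
    have hfactor : 3 ^ 3 * u ^ 6 + flexB u v * 4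
        = (2 * v - 9 * u ^ 3) * (2 * v - 27 * u ^ 3) := by
      simp only [flexB]; ring
    exact (hfactor ▸ h).of_mul_left_left
  have hA : flexA u v = 3 * u * (2 * v - 9 * u ^ 3) := by simp only [flexA]; ring
  exact hA ▸ (h3.mul_left hu).mul_left hw

end Coefficients

section OrderedRing

variable {R : Type*} [CommRing R] [LinearOrder R] [IsStrictOrderedRing R] {u v u' v' : R}

lemma sq_eq_sq_of_flex_eq (hu : u ≠ 0) (hu' : u' ≠ 0) (hA : flexA u v = flexA u' v')
    (hB : flexB u v = flexB u' v') : u ^ 2 = u' ^ 2 := by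
  by_contra hne
  have hψ := flex_divisionPolynomial u v
  have hψ' := flex_divisionPolynomial u' v'
  rw [← hA, ← hB] at hψ'
  have hprod : (u ^ 2 - u' ^ 2) * ((flexA u v + 27 * (u ^ 2 * u' ^ 2)) ^ 2
      + 243 * (u ^ 2 * u' ^ 2) * (u ^ 2 - u' ^ 2) ^ 2) = 0 := by
    linear_combination u' ^ 2 * hψ - u ^ 2 * hψ'
  have hsub : u ^ 2 - u' ^ 2 ≠ 0 := sub_ne_zero.mpr hne
  have hpos : 0 < 243 * (u ^ 2 * u' ^ 2) * (u ^ 2 - u' ^ 2) ^ 2 := by positivity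
  exact (mul_ne_zero hsub (add_pos_of_nonneg_of_pos (sq_nonneg _) hpos).ne') hprod

lemma eq_and_eq_of_flex_eq (hu : 0 < u) (hu' : 0 < u') (hA : flexA u v = flexA u' v')
    (hB : flexB u v = flexB u' v') : u = u' ∧ v = v' := by
  obtain rfl : u = u' :=
    (pow_left_inj₀ hu.le hu'.le two_ne_zero).mp (sq_eq_sq_of_flex_eq hu.ne' hu'.ne' hA hB)
  have h6u : 6 * u ≠ 0 := by positivity
  exact ⟨rfl, mul_left_cancel₀ h6u (sub_left_injective hA)⟩

end OrderedRing

section Real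

variable {s u v : ℝ}

lemma abs_fst_le_of_abs_flex_le (hs : 0 ≤ s) (hA : |flexA u v| ≤ s ^ 4) (hB : |flexB u v| ≤ s ^ 6) :
    |u| ≤ s := by
  by_contra! hsu
  have hst : s ^ 2 < u ^ 2 := sq_lt_sq.mpr (by rwa [abs_of_nonneg hs])
  have hψ := flex_divisionPolynomial u v
  set t := u ^ 2
  have ht : 0 < t := (sq_nonneg s).trans_lt hst
  have hAt : |flexA u v| ≤ t ^ 2 := by
    calc |flexA u v| ≤ (s ^ 2) ^ 2 := by rwa [← pow_mul]
      _ ≤ t ^ 2 := by gcongr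
  have hBt : |flexB u v| ≤ t ^ 3 := by
    calc |flexB u v| ≤ (s ^ 2) ^ 3 := by rwa [← pow_mul]
      _ ≤ t ^ 3 := by gcongr
  have hA1 : -(t ^ 2) * t ^ 2 ≤ flexA u v * t ^ 2 := by gcongr; exact neg_le_of_abs_le hAt
  have hB1 : -(t ^ 3) * t ≤ flexB u v * t := by gcongr; exact neg_le_of_abs_le hBt
  have hA2 : flexA u v ^ 2 ≤ (t ^ 2) ^ 2 := sq_le_sq' (neg_le_of_abs_le hAt) (le_of_abs_le hAt)
  have ht4 : 0 < t ^ 4 := by positivity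
  linarith

lemma abs_snd_le_of_abs_flex_le (hs : 0 ≤ s) (hA : |flexA u v| ≤ s ^ 4) (hB : |flexB u v| ≤ s ^ 6) :
    |v| ≤ 6 * s ^ 3 := by
  have hu : u ^ 2 ≤ s ^ 2 := sq_le_sq.mpr (by
    rw [abs_of_nonneg hs]; exact abs_fst_le_of_abs_flex_le hs hA hB)
  refine abs_le_of_sq_le_sq ?_ (by positivity)
  calc v ^ 2 = (3 * u ^ 2) ^ 3 + flexA u v * (3 * u ^ 2) + flexB u v := sq_eq_flex_cubic u v
    _ ≤ (3 * s ^ 2) ^ 3 + s ^ 4 * (3 * s ^ 2) + s ^ 6 := by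
      gcongr
      exacts [le_of_abs_le hA, le_of_abs_le hB]
    _ = 31 * s ^ 6 := by ring
    _ ≤ (6 * s ^ 3) ^ 2 := by nlinarith [pow_nonneg hs 6]

lemma abs_flexA_le (hu : |u| ≤ s / 3) (hv : |v| ≤ s ^ 3 / 3) : |flexA u v| ≤ s ^ 4 := by
  have hs : 0 ≤ s / 3 := (abs_nonneg u).trans hu
  calc |flexA u v| ≤ |6 * u * v| + |27 * u ^ 4| := abs_sub _ _
    _ = 6 * |u| * |v| + 27 * |u| ^ 4 := by simp only [abs_mul, abs_pow, Nat.abs_ofNat]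
    _ ≤ 6 * (s / 3) * (s ^ 3 / 3) + 27 * (s / 3) ^ 4 := by gcongr
    _ = s ^ 4 := by ring

lemma abs_flexB_le (hu : |u| ≤ s / 3) (hv : |v| ≤ s ^ 3 / 3) : |flexB u v| ≤ s ^ 6 := by
  have hs : 0 ≤ s / 3 := (abs_nonneg u).trans hu
  calc |flexB u v| ≤ |v ^ 2| + |18 * u ^ 3 * v| + |54 * u ^ 6| :=
        (abs_add_le _ _).trans (by gcongr; exact abs_sub _ _)
    _ = |v| ^ 2 + 18 * |u| ^ 3 * |v| + 54 * |u| ^ 6 := by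
      simp only [abs_mul, abs_pow, Nat.abs_ofNat]
    _ ≤ (s ^ 3 / 3) ^ 2 + 18 * (s / 3) ^ 3 * (s ^ 3 / 3) + 54 * (s / 3) ^ 6 := by gcongr
    _ = 11 / 27 * s ^ 6 := by ring
    _ ≤ s ^ 6 := by linarith [Even.pow_nonneg (by decide : Even 6) s]

lemma max_cube_sq_le_iff {a b : ℝ} :
    max (|a| ^ 3) (|b| ^ 2) ≤ (s ^ 2) ^ 6 ↔ |a| ≤ s ^ 4 ∧ |b| ≤ s ^ 6 := by
  have h3 : (s ^ 2) ^ 6 = (s ^ 4) ^ 3 := by ring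
  have h2 : (s ^ 2) ^ 6 = (s ^ 6) ^ 2 := by ring
  rw [max_le_iff]
  nth_rw 1 [h3]
  rw [h2, pow_le_pow_iff_left₀ (abs_nonneg a) (by positivity) three_ne_zero,
    pow_le_pow_iff_left₀ (abs_nonneg b) (by positivity) two_ne_zero]

end Real

section ThreeTorsion

open WeierstrassCurve.Affine

variable {F : Type*} [Field F] {W : WeierstrassCurve.Affine F}

lemma three_nsmul_some_eq_zero_iff [DecidableEq F] {x y : F} (h : W.Nonsingular x y) :
    3 • Point.some x y h = 0 ↔ y ≠ W.negY x y ∧ W.addX x x (W.slope x x y y) = x := by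
  have h3 : 3 • Point.some x y h = 0 ↔
      Point.some x y h + Point.some x y h = -Point.some x y h := by
    rw [eq_neg_iff_add_eq_zero, ← two_nsmul, ← succ_nsmul]
  rw [h3]
  by_cases hy : y = W.negY x y
  · rw [Point.add_self_of_Y_eq hy, eq_comm, neg_eq_zero]
    exact iff_of_false (Point.some_ne_zero h) fun hne => hne.1 hy
  · rw [Point.add_self_of_Y_ne hy, Point.neg_some, Point.some.injEq]
    refine ⟨fun hadd => ⟨hy, hadd.1⟩, fun ⟨_, hx⟩ => ⟨hx, ?_⟩⟩
    simp only [addY, negAddY, hx, sub_self, mul_zero, zero_add]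

variable [W.IsShortNF]

lemma equation_iff_of_isShortNF {x y : F} :
    W.Equation x y ↔ y ^ 2 = x ^ 3 + W.a₄ * x + W.a₆ := by
  simp [equation_iff]

lemma ne_negY_iff_of_isShortNF (h2 : (2 : F) ≠ 0) {x y : F} : y ≠ W.negY x y ↔ y ≠ 0 := by
  simp [negY, ← sub_eq_zero (b := -y), ← two_mul, h2]

lemma three_nsmul_some_eq_zero_iff_of_isShortNF [DecidableEq F] (h2 : (2 : F) ≠ 0) {x y : F}
    (h : W.Nonsingular x y) :
    3 • Point.some x y h = 0 ↔ y ≠ 0 ∧ ((3 * x ^ 2 + W.a₄) / (2 * y)) ^ 2 = 3 * x := by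
  rw [three_nsmul_some_eq_zero_iff, ne_negY_iff_of_isShortNF h2]
  refine and_congr_right fun hy => ?_
  have hslope : W.slope x x y y = (3 * x ^ 2 + W.a₄) / (2 * y) := by
    rw [slope_of_Y_ne rfl ((ne_negY_iff_of_isShortNF h2).mpr hy)]
    simp [negY, two_mul]
  rw [hslope, addX, W.a₁_of_isShortNF, W.a₂_of_isShortNF]
  constructor <;> intro hx <;> linear_combination hx

lemma exists_three_nsmul_eq_zero_iff_flex [DecidableEq F] (h2 : (2 : F) ≠ 0) (h3 : (3 : F) ≠ 0) :
    (∃ P : W.Point, P ≠ 0 ∧ 3 • P = 0) ↔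
      ∃ u v : F, v ≠ 0 ∧ flexA u v = W.a₄ ∧ flexB u v = W.a₆ := by
  constructor
  · rintro ⟨_ | ⟨x, y, h⟩, hP, hP3⟩
    · exact absurd rfl hP
    obtain ⟨hy, hx⟩ := (three_nsmul_some_eq_zero_iff_of_isShortNF h2 h).mp hP3
    obtain ⟨u, hu⟩ : ∃ u, (3 * x ^ 2 + W.a₄) / (2 * y) = 3 * u :=
      ⟨_, (mul_div_cancel₀ _ h3).symm⟩
    obtain rfl : x = 3 * u ^ 2 := mul_left_cancel₀ h3 (by rw [← hx, hu]; ring)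
    have hA : flexA u y = W.a₄ := by
      rw [div_eq_iff (mul_ne_zero h2 hy)] at hu
      rw [flexA]
      linear_combination -hu
    refine ⟨u, y, hy, hA, ?_⟩
    have hW := equation_iff_of_isShortNF.mp h.1
    rw [← hA] at hW
    linear_combination hW - sq_eq_flex_cubic u y
  · rintro ⟨u, v, hv, hA, hB⟩
    have hns : W.Nonsingular (3 * u ^ 2) v := by
      rw [nonsingular_iff]
      exact ⟨equation_iff_of_isShortNF.mpr (hA ▸ hB ▸ sq_eq_flex_cubic u v),
        .inr ((ne_negY_iff_of_isShortNF h2).mpr hv)⟩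
    refine ⟨.some _ v hns, Point.some_ne_zero hns,
      (three_nsmul_some_eq_zero_iff_of_isShortNF h2 hns).mpr ⟨hv, ?_⟩⟩
    have hslope : (3 * (3 * u ^ 2) ^ 2 + W.a₄) / (2 * v) = 3 * u := by
      rw [div_eq_iff (mul_ne_zero h2 hv), ← hA, flexA]
      ring
    rw [hslope]
    ring

end ThreeTorsion

section Integrality

lemma exists_intCast_eq_of_sq_eq {r : ℚ} {k : ℤ} (h : r ^ 2 = k) : ∃ n : ℤ, (n : ℚ) = r :=
  IsIntegrallyClosed.exists_algebraMap_eq_of_isIntegral_pow two_pos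
    (h ▸ isIntegral_algebraMap (R := ℤ) (A := ℚ))

open Polynomial in
lemma exists_intCast_eq_three_mul_of_flex {A B : ℤ} {u v : ℚ} (hA : flexA u v = A)
    (hB : flexB u v = B) : ∃ m : ℤ, (m : ℚ) = 3 * u := by
  refine IsIntegrallyClosed.isIntegral_iff.mp
    ⟨X ^ 8 + C (18 * A) * X ^ 4 + C (108 * B) * X ^ 2 - C (27 * A ^ 2), by monicity!, ?_⟩
  have hψ := flex_divisionPolynomial u v
  rw [hA, hB] at hψ
  simp only [eval₂_sub, eval₂_add, eval₂_mul, eval₂_X_pow, eval₂_C]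
  push_cast [eq_intCast]
  linear_combination 27 * hψ

-- Since `ψ₃` has leading coefficient `3`, it only bounds the denominator of `u` by `3`; the
-- Weierstrass equation modulo `3` removes this last denominator.
lemma exists_intCast_of_flex {A B : ℤ} {u v : ℚ} (hA : flexA u v = A) (hB : flexB u v = B) :
    ∃ a b : ℤ, (a : ℚ) = u ∧ (b : ℚ) = v := by
  have hv : v ^ 2 = (3 * u ^ 2) ^ 3 + A * (3 * u ^ 2) + B := hA ▸ hB ▸ sq_eq_flex_cubic u v
  obtain ⟨m, hm⟩ := exists_intCast_eq_three_mul_of_flex hA hB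
  have h9v : (9 * v) ^ 2 = (3 * (m ^ 6 + 9 * A * m ^ 2 + 27 * B) : ℤ) := by
    push_cast
    rw [hm]
    linear_combination 81 * hv
  obtain ⟨n, hn⟩ := exists_intCast_eq_of_sq_eq h9v
  have hnm : n ^ 2 = 3 * (m ^ 6 + 9 * A * m ^ 2 + 27 * B) := by
    rw [← hn] at h9v
    exact_mod_cast h9v
  obtain ⟨k, rfl⟩ : 3 ∣ n := Int.prime_three.dvd_of_dvd_pow ⟨_, hnm⟩
  obtain ⟨a, rfl⟩ : 3 ∣ m := Int.prime_three.dvd_of_dvd_pow (n := 6)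
    ⟨k ^ 2 - 3 * A * m ^ 2 - 9 * B, by linarith⟩
  obtain rfl : (a : ℚ) = u := by push_cast at hm; linarith
  obtain ⟨b, hb⟩ := exists_intCast_eq_of_sq_eq
    (k := (3 * a ^ 2) ^ 3 + A * (3 * a ^ 2) + B) (by exact_mod_cast hv)
  exact ⟨a, b, rfl, hb⟩

end Integrality

section Curves

instance EAB_isShortNF (A B : ℤ) : (EAB A B).IsShortNF := ⟨rfl, rfl, rfl⟩

lemma EAB_exists_three_nsmul_eq_zero_iff {A B : ℤ} :
    (∃ P : (EAB A B).Point, P ≠ 0 ∧ 3 • P = 0) ↔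
      ∃ u v : ℤ, v ≠ 0 ∧ flexA u v = A ∧ flexB u v = B := by
  rw [exists_three_nsmul_eq_zero_iff_flex two_ne_zero three_ne_zero]
  constructor
  · rintro ⟨u, v, hv, hA, hB⟩
    obtain ⟨a, b, rfl, rfl⟩ := exists_intCast_of_flex hA hB
    exact ⟨a, b, mod_cast hv, Int.cast_injective (hA ▸ intCast_flexA a b),
      Int.cast_injective (hB ▸ intCast_flexB a b)⟩
  · rintro ⟨u, v, hv, rfl, rfl⟩
    exact ⟨u, v, mod_cast hv, (intCast_flexA u v).symm, (intCast_flexB u v).symm⟩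

/-- The pairs `(A, B)` of height at most `X` for which `E_{A,B}` has a rational point of order
three, with neither nonsingularity of the curve nor minimality of `(A, B)` imposed. -/
def threeTorsionPairs (X : ℝ) : Set (ℤ × ℤ) :=
  {q | max ((|q.1| : ℝ) ^ 3) ((|q.2| : ℝ) ^ 2) ≤ X ^ 6 ∧
    ∃ P : (EAB q.1 q.2).Point, P ≠ 0 ∧ 3 • P = 0}

/-- The minimal pairs `(A, B)` of height at most `X` for which `E_{A,B}` is an elliptic curve with a
rational point of order three. -/
def minimalThreeTorsionPairs (X : ℝ) : Set (ℤ × ℤ) :=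
  {q | 4 * q.1 ^ 3 + 27 * q.2 ^ 2 ≠ 0 ∧
    (∀ p : ℕ, p.Prime → (p : ℤ) ^ 4 ∣ q.1 → ¬ (p : ℤ) ^ 6 ∣ q.2) ∧
    max ((|q.1| : ℝ) ^ 3) ((|q.2| : ℝ) ^ 2) ≤ X ^ 6 ∧
    ∃ P : (EAB q.1 q.2).Point, P ≠ 0 ∧ 3 • P = 0}

lemma minimalThreeTorsionPairs_subset (X : ℝ) :
    minimalThreeTorsionPairs X ⊆ threeTorsionPairs X :=
  fun _ hq => hq.2.2

lemma mem_minimalThreeTorsionPairs_of_flex {s : ℝ} {u v : ℤ} (hu : 0 < u) (hv : v < 0)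
    (huv : IsCoprime u v) (h3v : IsCoprime 3 v) (hus : |(u : ℝ)| ≤ s / 3)
    (hvs : |(v : ℝ)| ≤ s ^ 3 / 3) :
    (flexA u v, flexB u v) ∈ minimalThreeTorsionPairs (s ^ 2) := by
  refine ⟨?_, fun p hp hpA hpB => ?_, ?_, EAB_exists_three_nsmul_eq_zero_iff.mpr
    ⟨u, v, hv.ne, rfl, rfl⟩⟩
  · have hfactor : v - 4 * u ^ 3 < 0 := by linarith [pow_pos hu 3]
    rw [flex_discriminant]
    exact mul_ne_zero (mul_ne_zero (by norm_num) (pow_ne_zero 3 hv.ne)) hfactor.ne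
  · have hunit : IsUnit (p : ℤ) := (isCoprime_flexA_flexB huv h3v).isUnit_of_dvd'
      ((dvd_pow_self _ four_ne_zero).trans hpA) ((dvd_pow_self _ (by norm_num)).trans hpB)
    exact (Nat.prime_iff_prime_int.mp hp).not_isUnit hunit
  · rw [max_cube_sq_le_iff, intCast_flexA, intCast_flexB]
    exact ⟨abs_flexA_le hus hvs, abs_flexB_le hus hvs⟩

end Curves

section UpperBound

/-- The integers of absolute value at most `t`. -/
noncomputable def intBall (t : ℝ) : Finset ℤ := Finset.Icc (-⌊t⌋) ⌊t⌋

lemma mem_intBall {t : ℝ} {n : ℤ} : n ∈ intBall t ↔ |(n : ℝ)| ≤ t := by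
  rw [intBall, Finset.mem_Icc, ← abs_le, Int.le_floor, Int.cast_abs]

lemma card_intBall_le {t : ℝ} (ht : 1 ≤ t) : ((intBall t).card : ℝ) ≤ 3 * t := by
  have hfloor : 0 ≤ ⌊t⌋ := Int.floor_nonneg.mpr (by linarith)
  have hcard : ((intBall t).card : ℤ) = ⌊t⌋ + 1 - -⌊t⌋ := Int.card_Icc_of_le _ _ (by lia)
  calc ((intBall t).card : ℝ) = ⌊t⌋ + 1 - -⌊t⌋ := by exact_mod_cast hcard
    _ ≤ 3 * t := by linarith [Int.floor_le t]

lemma threeTorsionPairs_subset_image {s : ℝ} (hs : 0 ≤ s) :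
    threeTorsionPairs (s ^ 2) ⊆ (fun r : ℤ × ℤ => (flexA r.1 r.2, flexB r.1 r.2)) ''
      (intBall s ×ˢ intBall (6 * s ^ 3) : Finset (ℤ × ℤ)) := by
  rintro ⟨A, B⟩ ⟨hheight, hP⟩
  obtain ⟨u, v, -, rfl, rfl⟩ := EAB_exists_three_nsmul_eq_zero_iff.mp hP
  rw [max_cube_sq_le_iff, intCast_flexA, intCast_flexB] at hheight
  obtain ⟨hA, hB⟩ := hheight
  refine ⟨(u, v), Finset.mem_product.mpr ⟨?_, ?_⟩, rfl⟩
  · exact mem_intBall.mpr (abs_fst_le_of_abs_flex_le hs hA hB)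
  · exact mem_intBall.mpr (abs_snd_le_of_abs_flex_le hs hA hB)

lemma finite_threeTorsionPairs {s : ℝ} (hs : 0 ≤ s) : (threeTorsionPairs (s ^ 2)).Finite :=
  ((Finset.finite_toSet _).image _).subset (threeTorsionPairs_subset_image hs)

lemma ncard_threeTorsionPairs_le {s : ℝ} (hs : 1 ≤ s) :
    ((threeTorsionPairs (s ^ 2)).ncard : ℝ) ≤ 54 * (s ^ 2) ^ 2 := by
  have hs0 : 0 ≤ s := zero_le_one.trans hs
  have hcard : (threeTorsionPairs (s ^ 2)).ncard ≤
      (intBall s ×ˢ intBall (6 * s ^ 3)).card := by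
    refine (Set.ncard_le_ncard (threeTorsionPairs_subset_image hs0)
      ((Finset.finite_toSet _).image _)).trans ?_
    rw [← Set.ncard_coe_finset]
    exact Set.ncard_image_le (Finset.finite_toSet _)
  calc ((threeTorsionPairs (s ^ 2)).ncard : ℝ)
      ≤ (intBall s).card * (intBall (6 * s ^ 3)).card := by
        rw [Finset.card_product] at hcard; exact_mod_cast hcard
    _ ≤ 3 * s * (3 * (6 * s ^ 3)) := by
      gcongr
      · exact card_intBall_le hs
      · exact card_intBall_le (by linarith [one_le_pow₀ (n := 3) hs])
    _ = 54 * (s ^ 2) ^ 2 := by ring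

end UpperBound

section CoprimePairs

open Finset

lemma card_filter_dvd_dvd_le (M N d e : ℕ) :
    (#{q ∈ Ioc 0 M ×ˢ Ioc 0 N | d ∣ q.1 ∧ e ∣ q.2} : ℝ) ≤ M * N * ((d : ℝ) * e)⁻¹ := by
  rw [filter_product (d ∣ ·) (e ∣ ·), card_product, Nat.Ioc_filter_dvd_card_eq_div,
    Nat.Ioc_filter_dvd_card_eq_div, Nat.cast_mul]
  calc ((M / d : ℕ) : ℝ) * (N / e : ℕ) ≤ M / d * (N / e) := by
        gcongr <;> exact Nat.cast_div_le
    _ = M * N * ((d : ℝ) * e)⁻¹ := by ring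

lemma sum_card_filter_dvd_dvd_le (M N : ℕ) {k n : ℕ} (hk : k ≠ 0) (hkn : k ≤ n) :
    ∑ d ∈ Ioc k n, (#{q ∈ Ioc 0 M ×ˢ Ioc 0 N | d ∣ q.1 ∧ d ∣ q.2} : ℝ) ≤
      M * N * (k : ℝ)⁻¹ := by
  calc ∑ d ∈ Ioc k n, (#{q ∈ Ioc 0 M ×ˢ Ioc 0 N | d ∣ q.1 ∧ d ∣ q.2} : ℝ)
      ≤ ∑ d ∈ Ioc k n, M * N * ((d : ℝ) ^ 2)⁻¹ :=
        sum_le_sum fun d _ => by rw [sq]; exact card_filter_dvd_dvd_le M N d d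
    _ = M * N * ∑ d ∈ Ioc k n, ((d : ℝ) ^ 2)⁻¹ := (mul_sum _ _ _).symm
    _ ≤ M * N * (k : ℝ)⁻¹ := by
      gcongr
      exact (sum_Ioc_inv_sq_le_sub hk hkn).trans (sub_le_self _ (by positivity))

/-- The pairs `(k, b)` with `1 ≤ k ≤ M` and `1 ≤ b ≤ N` such that `b` is coprime to `3k`. -/
def coprimePairs (M N : ℕ) : Finset (ℕ × ℕ) :=
  {q ∈ Ioc 0 M ×ˢ Ioc 0 N | q.1.Coprime q.2 ∧ Nat.Coprime 3 q.2}

lemma mem_coprimePairs {M N k b : ℕ} : (k, b) ∈ coprimePairs M N ↔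
    ((0 < k ∧ k ≤ M) ∧ 0 < b ∧ b ≤ N) ∧ k.Coprime b ∧ Nat.Coprime 3 b := by
  simp [coprimePairs]

lemma box_subset_coprimePairs_union (M N : ℕ) :
    Ioc 0 M ×ˢ Ioc 0 N ⊆ coprimePairs M N ∪ ({q ∈ Ioc 0 M ×ˢ Ioc 0 N | 1 ∣ q.1 ∧ 3 ∣ q.2} ∪
      ({q ∈ Ioc 0 M ×ˢ Ioc 0 N | 2 ∣ q.1 ∧ 2 ∣ q.2} ∪
        (Ioc 4 (M + 4)).biUnion fun d => {q ∈ Ioc 0 M ×ˢ Ioc 0 N | d ∣ q.1 ∧ d ∣ q.2})) := by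
  intro q hq
  simp only [coprimePairs, mem_union, mem_filter, mem_biUnion, hq, true_and, one_dvd,
    Nat.prime_three.coprime_iff_not_dvd]
  by_cases h3 : 3 ∣ q.2
  · exact .inr (.inl h3)
  by_cases hcop : q.1.Coprime q.2
  · exact .inl ⟨hcop, h3⟩
  obtain ⟨p, hp, hp1, hp2⟩ := Nat.Prime.not_coprime_iff_dvd.mp hcop
  rcases eq_or_ne p 2 with rfl | hne2
  · exact .inr (.inr (.inl ⟨hp1, hp2⟩))
  have hne3 : p ≠ 3 := by rintro rfl; exact h3 hp2
  have hne4 : p ≠ 4 := by rintro rfl; exact absurd hp (by norm_num)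
  have hpM : p ≤ M := by
    obtain ⟨hpos, hle⟩ := mem_Ioc.mp (mem_product.mp hq).1
    exact (Nat.le_of_dvd hpos hp1).trans hle
  have htwo_le := hp.two_le
  exact .inr (.inr (.inr ⟨p, mem_Ioc.mpr (by lia), hp1, hp2⟩))

-- The union bound loses `1/3` (`3 ∣ b`), `1/4` (both even) and `∑_{d > 4} d⁻² ≤ 1/4`.
lemma card_coprimePairs_ge (M N : ℕ) : (M * N : ℝ) / 6 ≤ #(coprimePairs M N) := by
  have hcover := (card_le_card (box_subset_coprimePairs_union M N)).trans <|
    (card_union_le _ _).trans <| Nat.add_le_add_left ((card_union_le _ _).trans <|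
      Nat.add_le_add_left ((card_union_le _ _).trans <|
        Nat.add_le_add_left card_biUnion_le _) _) _
  rw [card_product, Nat.card_Ioc, Nat.card_Ioc, Nat.sub_zero, Nat.sub_zero,
    ← Nat.cast_le (α := ℝ)] at hcover
  have h3 := card_filter_dvd_dvd_le M N 1 3
  have h2 := card_filter_dvd_dvd_le M N 2 2
  have hd := sum_card_filter_dvd_dvd_le M N four_ne_zero (Nat.le_add_left 4 M)
  push_cast at hcover h3 h2 hd
  linarith

end CoprimePairs

section LowerBound

lemma card_coprimePairs_le_ncard {s : ℝ} (hs : 0 ≤ s) :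
    (coprimePairs ⌊s / 3⌋₊ ⌊s ^ 3 / 3⌋₊).card ≤ (minimalThreeTorsionPairs (s ^ 2)).ncard := by
  rw [← Set.ncard_coe_finset]
  refine Set.ncard_le_ncard_of_injOn
    (fun q => (flexA (q.1 : ℤ) (-q.2), flexB (q.1 : ℤ) (-q.2))) ?_ ?_
    ((finite_threeTorsionPairs hs).subset (minimalThreeTorsionPairs_subset _))
  · rintro ⟨k, b⟩ hq
    obtain ⟨⟨⟨hk, hkM⟩, hb, hbN⟩, hkb, h3b⟩ := mem_coprimePairs.mp hq
    refine mem_minimalThreeTorsionPairs_of_flex (mod_cast hk) (by lia)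
      hkb.isCoprime.neg_right (Nat.Coprime.isCoprime h3b).neg_right ?_ ?_
    · simpa using (Nat.le_floor_iff (by positivity)).mp hkM
    · simpa using (Nat.le_floor_iff (by positivity)).mp hbN
  · rintro ⟨k, b⟩ hq ⟨k', b'⟩ hq' heq
    have hk : 0 < k := (mem_coprimePairs.mp hq).1.1.1
    have hk' : 0 < k' := (mem_coprimePairs.mp hq').1.1.1
    obtain ⟨hA, hB⟩ := Prod.mk.inj heq
    obtain ⟨hkk', hbb'⟩ := eq_and_eq_of_flex_eq (mod_cast hk) (mod_cast hk') hA hB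
    exact Prod.ext (by lia) (by lia)

lemma le_ncard_minimalThreeTorsionPairs {s : ℝ} (hs : 6 ≤ s) :
    1 / 216 * (s ^ 2) ^ 2 ≤ ((minimalThreeTorsionPairs (s ^ 2)).ncard : ℝ) := by
  have half_le_floor {t : ℝ} (ht : 2 ≤ t) : t / 2 ≤ ⌊t⌋₊ := by
    linarith [Nat.lt_floor_add_one t]
  have hs3 : s ≤ s ^ 3 := le_self_pow₀ (by linarith) three_ne_zero
  calc (1 / 216 : ℝ) * (s ^ 2) ^ 2 = s / 3 / 2 * (s ^ 3 / 3 / 2) / 6 := by ring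
    _ ≤ (⌊s / 3⌋₊ * ⌊s ^ 3 / 3⌋₊ : ℝ) / 6 := by
      gcongr <;> exact half_le_floor (by linarith)
    _ ≤ (coprimePairs ⌊s / 3⌋₊ ⌊s ^ 3 / 3⌋₊).card := card_coprimePairs_ge _ _
    _ ≤ (minimalThreeTorsionPairs (s ^ 2)).ncard := by
      exact_mod_cast card_coprimePairs_le_ncard (by linarith)

end LowerBound

theorem count_three_torsion_curves :
    ∃ c₁ c₂ : ℝ, 0 < c₁ ∧ 0 < c₂ ∧ ∃ X₀ : ℝ, ∀ X : ℝ, X₀ ≤ X →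
      c₁ * X ^ 2 ≤
        (Set.ncard {q : ℤ × ℤ | 4 * q.1 ^ 3 + 27 * q.2 ^ 2 ≠ 0 ∧
          (∀ p : ℕ, p.Prime → (p : ℤ) ^ 4 ∣ q.1 → ¬ (p : ℤ) ^ 6 ∣ q.2) ∧
          max ((|q.1| : ℝ) ^ 3) ((|q.2| : ℝ) ^ 2) ≤ X ^ 6 ∧
          ∃ P : (EAB q.1 q.2).Point, P ≠ 0 ∧ 3 • P = 0} : ℝ) ∧
      (Set.ncard {q : ℤ × ℤ | 4 * q.1 ^ 3 + 27 * q.2 ^ 2 ≠ 0 ∧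
          (∀ p : ℕ, p.Prime → (p : ℤ) ^ 4 ∣ q.1 → ¬ (p : ℤ) ^ 6 ∣ q.2) ∧
          max ((|q.1| : ℝ) ^ 3) ((|q.2| : ℝ) ^ 2) ≤ X ^ 6 ∧
          ∃ P : (EAB q.1 q.2).Point, P ≠ 0 ∧ 3 • P = 0} : ℝ) ≤ c₂ * X ^ 2 := by
  refine ⟨1 / 216, 54, by norm_num, by norm_num, 36, fun X hX => ?_⟩
  have hs : 6 ≤ √X := Real.le_sqrt_of_sq_le (by linarith)
  have hlower := le_ncard_minimalThreeTorsionPairs hs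
  have hupper := ncard_threeTorsionPairs_le (s := √X) (by linarith)
  have hmono := Set.ncard_le_ncard (minimalThreeTorsionPairs_subset (√X ^ 2))
    (finite_threeTorsionPairs (Real.sqrt_nonneg X))
  rw [Real.sq_sqrt (by linarith)] at hlower hupper hmono
  exact ⟨hlower, (Nat.cast_le.mpr hmono).trans hupper⟩
end

section
/- There exist constants c₁, c₂ > 0 such that for all sufficiently large X, c₁·X ≤ #{(A,B) ∈ ℤ² : 4A³ + 27B² ≠ 0, for every prime p (p⁴ ∣ A implies p⁶ ∤ B), max(|A|³, |B|²) ≤ X⁶, and the elliptic curve E_{A,B}: y² = x³ + Ax + B has a rational point of order 5} ≤ c₂·X. -/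
/-!
Moving a point of order 5 to the origin of the Tate normal form, and then completing the square and
the cube, shows that `y² = x³ + Ax + B` has a rational point of order 5 exactly when `A` and `B` are
the values at some rational `a, b ≠ 0` of two forms `formA` and `formB` of degrees 4 and 6.

The resultant of the two forms bounds the denominators of `a` and `b` by 38880, and by homogeneity
and compactness the height of `(formA a b, formB a b)` is comparable to `‖(a, b)‖²`. So curves of
height at most `X` come from integer points in a ball of radius `O(√X)`, of which there are `O(X)`.
Conversely every coprime pair of positive integers of size `O(√X)` gives, after minimalisation, a
curve of height at most `X`; there are `≫ X` such pairs, and at most 12 give the same curve because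
its `j`-invariant is a function of degree 12 of `a / b`.
-/

namespace FiveTorsion

section Forms

variable {R : Type*} [CommRing R]

/-- The quartic form `-27 c₄` of the Tate normal form `y² + (b - a)xy - ab²y = x³ - abx²`. -/
def formA (a b : R) : R :=
  -27 * (a ^ 4 - 12 * a ^ 3 * b + 14 * a ^ 2 * b ^ 2 + 12 * a * b ^ 3 + b ^ 4)

/-- The sextic form `-54 c₆` of the Tate normal form, companion of the quartic `formA`. -/
def formB (a b : R) : R :=
  54 * (a ^ 2 + b ^ 2) * (a ^ 4 - 18 * a ^ 3 * b + 74 * a ^ 2 * b ^ 2 + 18 * a * b ^ 3 + b ^ 4)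

@[simp, norm_cast]
lemma intCast_formA (a b : ℤ) : ((formA a b : ℤ) : R) = formA (a : R) (b : R) := by
  simp [formA]

@[simp, norm_cast]
lemma intCast_formB (a b : ℤ) : ((formB a b : ℤ) : R) = formB (a : R) (b : R) := by
  simp [formB]

lemma formA_mul_mul (c a b : R) : formA (c * a) (c * b) = c ^ 4 * formA a b := by
  unfold formA; ring

lemma formB_mul_mul (c a b : R) : formB (c * a) (c * b) = c ^ 6 * formB a b := by
  unfold formB; ring

lemma discriminant_formA_formB (a b : R) :
    4 * formA a b ^ 3 + 27 * formB a b ^ 2 =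
      -136048896 * (a ^ 5 * b ^ 5 * (a ^ 2 - 11 * a * b - b ^ 2)) := by
  unfold formA formB; ring

lemma dvd_mul_pow_nine_left {d a b : R} (hA : d ∣ formA a b) (hB : d ∣ formB a b) :
    d ∣ 38880 * a ^ 9 := by
  -- The cofactors come from the extended Euclidean algorithm for `formA · 1` and `formB · 1`.
  have bezout : 38880 * a ^ 9 =
      (-67326 * a ^ 5 + 472610 * a ^ 4 * b + 45600 * a ^ 3 * b ^ 2 + 478900 * a ^ 2 * b ^ 3
        + 112950 * a * b ^ 4 + 6242 * b ^ 5) * formA a b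
      + (-32943 * a ^ 3 + 47287 * a ^ 2 * b + 37749 * a * b ^ 2 + 3121 * b ^ 3) * formB a b := by
    unfold formA formB; ring
  exact bezout ▸ dvd_add (hA.mul_left _) (hB.mul_left _)

lemma dvd_mul_pow_nine {d a b : R} (hA : d ∣ formA a b) (hB : d ∣ formB a b) :
    d ∣ 38880 * a ^ 9 ∧ d ∣ 38880 * b ^ 9 := by
  have rotA : formA b (-a) = formA a b := by unfold formA; ring
  have rotB : formB b (-a) = formB a b := by unfold formB; ring
  exact ⟨dvd_mul_pow_nine_left hA hB, dvd_mul_pow_nine_left (rotA ▸ hA) (rotB ▸ hB)⟩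

lemma eq_zero_of_formA_eq_zero_of_formB_eq_zero [IsDomain R] [CharZero R] {a b : R}
    (hA : formA a b = 0) (hB : formB a b = 0) : a = 0 ∧ b = 0 := by
  simpa using dvd_mul_pow_nine (zero_dvd_iff.2 hA) (zero_dvd_iff.2 hB)

lemma discriminant_ne_zero {a b : ℚ} (ha : a ≠ 0) (hb : b ≠ 0) :
    4 * formA a b ^ 3 + 27 * formB a b ^ 2 ≠ 0 := by
  have hquad : a ^ 2 - 11 * a * b - b ^ 2 ≠ 0 := by
    intro h
    have h125 : IsSquare (125 : ℚ) :=
      ⟨(2 * a - 11 * b) / b, by field_simp; linear_combination -4 * h⟩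
    norm_num at h125
  rw [discriminant_formA_formB]
  positivity

end Forms

section Torsion

open WeierstrassCurve.Affine

lemma five_nsmul_eq_zero_iff {G : Type*} [AddCommGroup G] {P : G} :
    5 • P = 0 ↔ P + P + P = -(P + P) := by
  rw [show 5 • P = P + P + P + (P + P) by abel, add_eq_zero_iff_eq_neg]

variable {F : Type*} [Field F] {W : WeierstrassCurve.Affine F} [W.IsShortNF]

lemma negY_of_isShortNF (x y : F) : W.negY x y = -y := by
  simp [negY]

variable [DecidableEq F] {x y x₁ y₁ x₂ y₂ x₃ y₃ ℓ : F}

lemma exists_some_add_some (h₁ : W.Nonsingular x₁ y₁) (h₂ : W.Nonsingular x₂ y₂)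
    (hxy : ¬(x₁ = x₂ ∧ y₁ = W.negY x₂ y₂)) (hℓ : W.slope x₁ x₂ y₁ y₂ = ℓ)
    (hx₃ : ℓ ^ 2 - x₁ - x₂ = x₃) (hy₃ : ℓ * (x₁ - x₃) - y₁ = y₃) :
    ∃ h₃, Point.some x₁ y₁ h₁ + Point.some x₂ y₂ h₂ = Point.some x₃ y₃ h₃ := by
  have hX : W.addX x₁ x₂ ℓ = x₃ := by simp [addX, hx₃]
  have hY : W.addY x₁ x₂ y₁ ℓ = y₃ := by
    rw [addY, negY_of_isShortNF, negAddY, hX, ← hy₃]; ring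
  subst hℓ hX hY
  exact ⟨_, Point.add_some hxy⟩

lemma exists_some_add_self (h : W.Nonsingular x y) (hy : 2 * y ≠ 0)
    (hℓ : 2 * y * ℓ = 3 * x ^ 2 + W.a₄) :
    ∃ h', Point.some x y h + Point.some x y h =
      Point.some (ℓ ^ 2 - 2 * x) (ℓ * (3 * x - ℓ ^ 2) - y) h' := by
  have hne : y ≠ W.negY x y := by
    rw [negY_of_isShortNF]
    exact fun h => hy (by linear_combination h)
  have hslope : W.slope x x y y = ℓ := by
    rw [slope_of_Y_ne rfl hne, negY_of_isShortNF, W.a₁_of_isShortNF, W.a₂_of_isShortNF,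
      div_eq_iff (by rwa [sub_neg_eq_add, ← two_mul])]
    linear_combination -hℓ
  exact exists_some_add_some h h (fun h => hne h.2) hslope (by ring) (by ring)

variable [NeZero (2 : F)]

/- The tangent at `P` has slope `ℓ` and `x(P) - x(2P) = 3x - ℓ²`. If this is nonzero then
`3P = 2P + P` has the ordinate of `-2P` as soon as it has the same abscissa. -/
lemma five_nsmul_some_eq_zero_iff (h : W.Nonsingular x y) (hy : y ≠ 0)
    (hℓ : 2 * y * ℓ = 3 * x ^ 2 + W.a₄) :
    5 • Point.some x y h = 0 ↔
      (3 * x - ℓ ^ 2) ^ 3 = 4 * y * ((3 * x - ℓ ^ 2) * ℓ - y) := by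
  have h2y : 2 * y ≠ 0 := mul_ne_zero two_ne_zero hy
  obtain ⟨h', hPP⟩ := exists_some_add_self h h2y hℓ
  obtain hp | hp := eq_or_ne (3 * x - ℓ ^ 2) 0
  · have hneg : Point.some x y h + Point.some x y h = -Point.some x y h := by
      rw [hPP, Point.neg_some]
      simp only [Point.some.injEq, negY_of_isShortNF]
      exact ⟨by linear_combination -hp, by linear_combination ℓ * hp⟩
    have hleft : ¬ 5 • Point.some x y h = 0 := by
      rw [five_nsmul_eq_zero_iff, hneg]
      simp
    have hright : (3 * x - ℓ ^ 2) ^ 3 ≠ 4 * y * ((3 * x - ℓ ^ 2) * ℓ - y) := by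
      rw [hp]
      exact fun h0 => pow_ne_zero 2 h2y (by linear_combination h0)
    exact iff_of_false hleft hright
  · set p := 3 * x - ℓ ^ 2 with hp_def
    have hx : ℓ ^ 2 - 2 * x ≠ x := fun hx => hp (by linear_combination -hx)
    have hslope : W.slope (ℓ ^ 2 - 2 * x) x (ℓ * p - y) y = 2 * y / p - ℓ := by
      rw [slope_of_X_ne hx, div_eq_iff (sub_ne_zero.2 hx),
        show ℓ ^ 2 - 2 * x - x = -p by rw [hp_def]; ring]
      field_simp
      ring
    obtain ⟨h'', hPPP⟩ := exists_some_add_some h' h (fun h => hx h.1) hslope rfl rfl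
    rw [five_nsmul_eq_zero_iff, hPP, hPPP, Point.neg_some]
    simp only [Point.some.injEq, negY_of_isShortNF]
    have habscissa : (2 * y / p - ℓ) ^ 2 - (ℓ ^ 2 - 2 * x) - x = ℓ ^ 2 - 2 * x ↔
        p ^ 3 = 4 * y * (p * ℓ - y) := by
      have hdiff : (2 * y / p - ℓ) ^ 2 - (ℓ ^ 2 - 2 * x) - x - (ℓ ^ 2 - 2 * x) =
          (p ^ 3 - 4 * y * (p * ℓ - y)) / p ^ 2 := by
        have hℓsq : ℓ ^ 2 = 3 * x - p := by rw [hp_def]; ring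
        field_simp
        linear_combination -p ^ 2 * hℓsq
      rw [← sub_eq_zero, hdiff, div_eq_zero_iff, or_iff_left (pow_ne_zero 2 hp), sub_eq_zero]
    rw [habscissa, and_iff_left_iff_imp]
    intro h3
    linear_combination -(2 * y / p - ℓ) * habscissa.2 h3

lemma exists_formA_formB_of_five_nsmul_eq_zero [NeZero (3 : F)] (h : W.Nonsingular x y)
    (h5 : 5 • Point.some x y h = 0) :
    ∃ a b : F, a ≠ 0 ∧ b ≠ 0 ∧ W.a₄ = formA a b ∧ W.a₆ = formB a b := by
  have hy : y ≠ 0 := by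
    rintro rfl
    have hPP : Point.some x 0 h + Point.some x 0 h = 0 :=
      Point.add_self_of_Y_eq (by rw [negY_of_isShortNF, neg_zero])
    simp [five_nsmul_eq_zero_iff, hPP] at h5
  have h2y : 2 * y ≠ 0 := mul_ne_zero two_ne_zero hy
  have h2 : (2 : F) ≠ 0 := two_ne_zero
  have h3 : (3 : F) ≠ 0 := three_ne_zero
  obtain ⟨ℓ, hℓ⟩ : ∃ ℓ, 2 * y * ℓ = 3 * x ^ 2 + W.a₄ := ⟨_, mul_div_cancel₀ _ h2y⟩
  have hrel := (five_nsmul_some_eq_zero_iff h hy hℓ).1 h5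
  have hp : 3 * x - ℓ ^ 2 ≠ 0 := by
    intro hp
    rw [hp] at hrel
    exact pow_ne_zero 2 h2y (by linear_combination hrel)
  obtain ⟨a, b, ha, hb, hpab, rfl⟩ :
      ∃ a b, a ≠ 0 ∧ b ≠ 0 ∧ 3 * x - ℓ ^ 2 = -36 * a * b ∧ -108 * a * b ^ 2 = y := by
    generalize 3 * x - ℓ ^ 2 = p at hp
    refine ⟨-p ^ 2 / (2 ^ 2 * 3 * y), y / (3 * p), by simp [*], by simp [*], ?_, ?_⟩ <;>
      field_simp <;> ring
  obtain rfl : ℓ = 3 * (b - a) := by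
    rw [hpab] at hrel
    have hc : (2 : F) ^ 6 * 3 ^ 5 * a ^ 2 * b ^ 3 ≠ 0 := by simp [*]
    exact mul_left_cancel₀ hc (by linear_combination -hrel)
  obtain rfl : x = 3 * (a ^ 2 - 6 * a * b + b ^ 2) :=
    mul_left_cancel₀ h3 (by linear_combination hpab)
  have hA : W.a₄ = formA a b := by unfold formA; linear_combination -hℓ
  refine ⟨a, b, ha, hb, hA, ?_⟩
  have heq := (W.equation_iff _ _).1 h.1
  simp only [W.a₁_of_isShortNF, W.a₂_of_isShortNF, W.a₃_of_isShortNF, hA] at heq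
  unfold formA at heq
  unfold formB
  linear_combination -heq

theorem exists_five_torsion_iff [NeZero (3 : F)] :
    (∃ P : W.Point, P ≠ 0 ∧ 5 • P = 0) ↔
      ∃ a b : F, a ≠ 0 ∧ b ≠ 0 ∧ W.a₄ = formA a b ∧ W.a₆ = formB a b := by
  constructor
  · rintro ⟨_ | ⟨x, y, h⟩, hP, h5⟩
    · exact absurd rfl hP
    · exact exists_formA_formB_of_five_nsmul_eq_zero h h5
  · rintro ⟨a, b, ha, hb, hA, hB⟩
    have h2 : (2 : F) ≠ 0 := two_ne_zero
    have h3 : (3 : F) ≠ 0 := three_ne_zero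
    have hy : -(2 ^ 2 * 3 ^ 3 * a * b ^ 2) ≠ 0 := by simp [*]
    have h : W.Nonsingular (3 * (a ^ 2 - 6 * a * b + b ^ 2)) (-(2 ^ 2 * 3 ^ 3 * a * b ^ 2)) := by
      rw [W.nonsingular_iff', W.equation_iff, W.a₁_of_isShortNF, W.a₂_of_isShortNF,
        W.a₃_of_isShortNF, hA, hB]
      refine ⟨by unfold formA formB; ring, Or.inr ?_⟩
      simp [*]
    refine ⟨Point.some _ _ h, Point.some_ne_zero h, ?_⟩
    rw [five_nsmul_some_eq_zero_iff h hy (ℓ := 3 * (b - a)) (by rw [hA]; unfold formA; ring)]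
    ring

end Torsion

section Denominators

lemma exists_common_denominator (a b : ℚ) :
    ∃ d i j : ℤ, IsCoprime d (i.gcd j) ∧ d * a = i ∧ d * b = j := by
  let f : Fin 3 → ℤ := ![a.den * b.den, a.num * b.den, b.num * a.den]
  obtain ⟨g, hfg, hg⟩ := Finset.univ.extract_gcd f Finset.univ_nonempty
  generalize Finset.univ.gcd f = c at hfg
  have hd : (a.den * b.den : ℤ) = c * g 0 := hfg 0 (Finset.mem_univ _)
  have hi : a.num * b.den = c * g 1 := hfg 1 (Finset.mem_univ _)
  have hj : b.num * a.den = c * g 2 := hfg 2 (Finset.mem_univ _)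
  have hc : (c : ℚ) ≠ 0 := by
    have hden : (a.den * b.den : ℤ) ≠ 0 := by positivity
    exact_mod_cast left_ne_zero_of_mul (hd ▸ hden)
  refine ⟨g 0, g 1, g 2, ?_, mul_left_cancel₀ hc ?_, mul_left_cancel₀ hc ?_⟩
  · rw [Int.isCoprime_iff_gcd_eq_one]
    simpa [Fin.univ_succ, ← Int.coe_gcd, ← Int.abs_eq_normalize, Int.gcd_eq_natAbs_gcd_natAbs,
      Int.natAbs_abs] using hg
  · qify at hd hi
    linear_combination -a * hd + hi + b.den * a.mul_den_eq_num
  · qify at hd hj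
    linear_combination -b * hd + hj + a.den * b.mul_den_eq_num

lemma dvd_of_dvd_mul_pow {d c i j : ℤ} {n : ℕ} (hd : IsCoprime d (i.gcd j))
    (hi : d ∣ c * i ^ n) (hj : d ∣ c * j ^ n) : d ∣ c := by
  refine (hd.pow_right (n := n)).dvd_of_dvd_mul_right ?_
  rw [← Nat.cast_pow, ← Int.pow_gcd_pow, Int.coe_gcd]
  exact (gcd_mul_left' _ _ _).dvd_iff_dvd_right.1 (dvd_gcd hi hj)

instance (A B : ℤ) : (EAB A B).IsShortNF := ⟨rfl, rfl, rfl⟩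

lemma exists_scaled_formA_formB {A B : ℤ} (h : ∃ P : (EAB A B).Point, P ≠ 0 ∧ 5 • P = 0) :
    ∃ i j : ℤ, 38880 ^ 4 * A = formA i j ∧ 38880 ^ 6 * B = formB i j := by
  obtain ⟨a, b, -, -, hA, hB⟩ := exists_five_torsion_iff.1 h
  obtain ⟨d, i, j, hcop, hi, hj⟩ := exists_common_denominator a b
  have hA' : formA i j = d ^ 4 * A := by
    have : formA (i : ℚ) j = d ^ 4 * A := by rw [← hi, ← hj, formA_mul_mul, ← hA]; rfl
    exact_mod_cast this
  have hB' : formB i j = d ^ 6 * B := by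
    have : formB (i : ℚ) j = d ^ 6 * B := by rw [← hi, ← hj, formB_mul_mul, ← hB]; rfl
    exact_mod_cast this
  obtain ⟨hdi, hdj⟩ := dvd_mul_pow_nine (d := d) (a := i) (b := j)
    (hA' ▸ (dvd_pow_self d four_ne_zero).mul_right A)
    (hB' ▸ (dvd_pow_self d (by norm_num)).mul_right B)
  obtain ⟨e, he⟩ := dvd_of_dvd_mul_pow hcop hdi hdj
  refine ⟨e * i, e * j, ?_, ?_⟩
  · rw [formA_mul_mul, hA', he]; ring
  · rw [formB_mul_mul, hB', he]; ring

end Denominators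

section Height

lemma exists_bounds_of_homogeneous {E : Type*} [NormedAddCommGroup E] [NormedSpace ℝ E]
    [ProperSpace E] {φ : E → ℝ} {k : ℕ} (hk : k ≠ 0) (hcont : Continuous φ)
    (hhom : ∀ (t : ℝ) (v : E), φ (t • v) = |t| ^ k * φ v) (hpos : ∀ v, v ≠ 0 → 0 < φ v) :
    ∃ c C : ℝ, 0 < c ∧ 0 < C ∧ ∀ v, c * ‖v‖ ^ k ≤ φ v ∧ φ v ≤ C * ‖v‖ ^ k := by
  have hS : IsCompact (Metric.sphere (0 : E) 1) := isCompact_sphere 0 1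
  obtain ⟨c, hc, hlow⟩ := hS.exists_forall_le' hcont.continuousOn (a := 0) fun v hv =>
    hpos v (ne_zero_of_mem_unit_sphere ⟨v, hv⟩)
  obtain ⟨C, hup⟩ := hS.exists_bound_of_continuousOn hcont.continuousOn
  refine ⟨c, max C 1, hc, by positivity, fun v => ?_⟩
  obtain rfl | hv := eq_or_ne v 0
  · have hφ0 : φ 0 = 0 := by simpa [hk] using hhom 0 0
    simp [hφ0, hk]
  · have hmem : ‖v‖⁻¹ • v ∈ Metric.sphere (0 : E) 1 := by simp [norm_smul, hv]
    have hφv : φ v = φ (‖v‖⁻¹ • v) * ‖v‖ ^ k := by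
      rw [hhom, abs_inv, abs_norm, inv_pow, mul_right_comm,
        inv_mul_cancel₀ (pow_ne_zero k (norm_ne_zero_iff.2 hv)), one_mul]
    rw [hφv]
    refine ⟨?_, ?_⟩ <;> gcongr
    · exact hlow _ hmem
    · exact (le_abs_self _).trans ((hup _ hmem).trans (le_max_left _ _))

/-- The height `H(E_{A,B})`, extended to real coefficients so that compactness can be used. -/
noncomputable def height (A B : ℝ) : ℝ :=
  max (|A| ^ 3) (|B| ^ 2) ^ (6⁻¹ : ℝ)

variable {A B X : ℝ}

lemma height_le_iff (hX : 0 ≤ X) : height A B ≤ X ↔ max (|A| ^ 3) (|B| ^ 2) ≤ X ^ 6 := by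
  rw [height, Real.rpow_inv_le_iff_of_pos (by positivity) hX (by norm_num)]
  norm_cast

lemma height_pow_mul_pow_mul (t A B : ℝ) :
    height (t ^ 4 * A) (t ^ 6 * B) = |t| ^ 2 * height A B := by
  have hmax : max (|t ^ 4 * A| ^ 3) (|t ^ 6 * B| ^ 2) =
      (|t| ^ 2) ^ 6 * max (|A| ^ 3) (|B| ^ 2) := by
    rw [mul_max_of_nonneg _ _ (by positivity)]
    congr 1 <;> rw [abs_mul, abs_pow] <;> ring
  rw [height, hmax, Real.mul_rpow (by positivity) (by positivity), height]
  congr 1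
  exact_mod_cast Real.pow_rpow_inv_natCast (pow_nonneg (abs_nonneg t) 2) (n := 6) (by norm_num)

lemma height_pos (h : A ≠ 0 ∨ B ≠ 0) : 0 < height A B := by
  refine Real.rpow_pos_of_pos (lt_max_iff.2 ?_) _
  exact h.imp (fun _ => by positivity) (fun _ => by positivity)

lemma continuous_height : Continuous fun v : ℝ × ℝ => height v.1 v.2 :=
  ((continuous_fst.abs.pow 3).max (continuous_snd.abs.pow 2)).rpow_const fun _ => .inr (by norm_num)

lemma exists_height_bounds : ∃ c C : ℝ, 0 < c ∧ 0 < C ∧ ∀ v : ℝ × ℝ,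
    c * ‖v‖ ^ 2 ≤ height (formA v.1 v.2) (formB v.1 v.2) ∧
      height (formA v.1 v.2) (formB v.1 v.2) ≤ C * ‖v‖ ^ 2 := by
  refine exists_bounds_of_homogeneous two_ne_zero ?_ (fun t v => ?_) (fun v hv => height_pos ?_)
  · refine continuous_height.comp (f := fun v : ℝ × ℝ => (formA v.1 v.2, formB v.1 v.2)) ?_
    unfold formA formB
    fun_prop
  · simp [formA_mul_mul, formB_mul_mul, height_pow_mul_pow_mul]
  · contrapose! hv
    obtain ⟨h1, h2⟩ := eq_zero_of_formA_eq_zero_of_formB_eq_zero hv.1 hv.2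
    exact Prod.ext h1 h2

end Height

section UpperBound

open Filter

/-- The pairs `(A, B)` counted by the theorem, for the height bound `X`. -/
def fiveTorsionPairs (X : ℝ) : Set (ℤ × ℤ) :=
  {q | 4 * q.1 ^ 3 + 27 * q.2 ^ 2 ≠ 0 ∧
    (∀ p : ℕ, p.Prime → (p : ℤ) ^ 4 ∣ q.1 → ¬ (p : ℤ) ^ 6 ∣ q.2) ∧
    max ((|q.1| : ℝ) ^ 3) ((|q.2| : ℝ) ^ 2) ≤ X ^ 6 ∧
    ∃ P : (EAB q.1 q.2).Point, P ≠ 0 ∧ 5 • P = 0}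

lemma ncard_closedBall_le {r : ℝ} (hr : 1 ≤ r) :
    (Metric.closedBall (0 : ℤ × ℤ) r).ncard ≤ (3 * r) ^ 2 := by
  have hr' : (1 : ℤ) ≤ ⌊r⌋ := Int.le_floor.2 (by exact_mod_cast hr)
  have hcard : (((Finset.Icc (-⌊r⌋) ⌊r⌋).card : ℤ) : ℝ) ≤ 3 * r := by
    rw [Int.card_Icc_of_le _ _ (by linarith)]
    have := Int.floor_le r
    push_cast
    linarith
  rw [← Prod.mk_zero_zero, ← closedBall_prod_same, Set.ncard_prod, Int.closedBall_eq_Icc]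
  simp only [Int.cast_zero, zero_sub, zero_add, Int.ceil_neg]
  rw [← Finset.coe_Icc, Set.ncard_coe_finset]
  push_cast at hcard ⊢
  rw [← sq]
  gcongr

lemma norm_intCast_prod (v : ℤ × ℤ) : ‖((v.1 : ℝ), (v.2 : ℝ))‖ = ‖v‖ := by
  simp [Prod.norm_def, Int.norm_eq_abs]

lemma scaled_fiveTorsionPairs_subset {c X : ℝ} (hc : 0 < c) (hX : 0 ≤ X)
    (hheight : ∀ v : ℝ × ℝ, c * ‖v‖ ^ 2 ≤ height (formA v.1 v.2) (formB v.1 v.2)) :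
    (fun q : ℤ × ℤ => (38880 ^ 4 * q.1, 38880 ^ 6 * q.2)) '' fiveTorsionPairs X ⊆
      (fun v : ℤ × ℤ => (formA v.1 v.2, formB v.1 v.2)) ''
        Metric.closedBall 0 √(38880 ^ 2 / c * X) := by
  rintro _ ⟨⟨A, B⟩, ⟨-, -, hAB, htors⟩, rfl⟩
  obtain ⟨i, j, hA, hB⟩ := exists_scaled_formA_formB htors
  refine ⟨(i, j), ?_, Prod.ext hA.symm hB.symm⟩
  have hbound : c * ‖((i : ℝ), (j : ℝ))‖ ^ 2 ≤ 38880 ^ 2 * X :=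
    calc c * ‖((i : ℝ), (j : ℝ))‖ ^ 2
        ≤ height (formA (i : ℝ) j) (formB (i : ℝ) j) := hheight (i, j)
      _ = height (38880 ^ 4 * A) (38880 ^ 6 * B) := by
        simp only [← intCast_formA, ← intCast_formB, ← hA, ← hB, Int.cast_mul, Int.cast_pow,
          Int.cast_ofNat]
      _ = 38880 ^ 2 * height A B := by rw [height_pow_mul_pow_mul]; norm_num
      _ ≤ 38880 ^ 2 * X := by
        gcongr
        exact (height_le_iff hX).2 hAB
  rw [mem_closedBall_zero_iff, ← norm_intCast_prod]
  apply Real.le_sqrt_of_sq_le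
  rw [div_mul_eq_mul_div, le_div_iff₀' hc]
  exact hbound

lemma finite_and_ncard_le_ncard_closedBall {c X : ℝ} (hc : 0 < c) (hX : 0 ≤ X)
    (hheight : ∀ v : ℝ × ℝ, c * ‖v‖ ^ 2 ≤ height (formA v.1 v.2) (formB v.1 v.2)) :
    (fiveTorsionPairs X).Finite ∧ (fiveTorsionPairs X).ncard ≤
      (Metric.closedBall (0 : ℤ × ℤ) √(38880 ^ 2 / c * X)).ncard := by
  have hsub := scaled_fiveTorsionPairs_subset hc hX hheight
  have hinj : Function.Injective fun q : ℤ × ℤ => (38880 ^ 4 * q.1, 38880 ^ 6 * q.2) := by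
    intro q q' h
    simpa [Prod.ext_iff] using h
  have hball : (Metric.closedBall (0 : ℤ × ℤ) √(38880 ^ 2 / c * X)).Finite :=
    (isCompact_closedBall _ _).finite_of_discrete
  refine ⟨((hball.image _).subset hsub).of_finite_image hinj.injOn, ?_⟩
  rw [← Set.ncard_image_of_injective _ hinj]
  exact (Set.ncard_le_ncard hsub (hball.image _)).trans (Set.ncard_image_le hball)

lemma finite_fiveTorsionPairs {X : ℝ} (hX : 0 ≤ X) : (fiveTorsionPairs X).Finite := by
  obtain ⟨c, _, hc, _, hheight⟩ := exists_height_bounds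
  exact (finite_and_ncard_le_ncard_closedBall hc hX fun v => (hheight v).1).1

lemma eventually_ncard_fiveTorsionPairs_le :
    ∃ C : ℝ, 0 < C ∧ ∀ᶠ X in atTop, (fiveTorsionPairs X).ncard ≤ C * X := by
  obtain ⟨c, _, hc, _, hheight⟩ := exists_height_bounds
  have hlarge : ∀ᶠ X : ℝ in atTop, 1 ≤ 38880 ^ 2 / c * X :=
    (tendsto_id.const_mul_atTop (by positivity)).eventually_ge_atTop 1
  refine ⟨9 * (38880 ^ 2 / c), by positivity, ?_⟩
  filter_upwards [eventually_ge_atTop 0, hlarge] with X hX hX1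
  calc ((fiveTorsionPairs X).ncard : ℝ)
      ≤ (Metric.closedBall (0 : ℤ × ℤ) √(38880 ^ 2 / c * X)).ncard := by
        exact_mod_cast (finite_and_ncard_le_ncard_closedBall hc hX fun v => (hheight v).1).2
    _ ≤ (3 * √(38880 ^ 2 / c * X)) ^ 2 := ncard_closedBall_le (Real.one_le_sqrt.2 hX1)
    _ = 9 * (38880 ^ 2 / c) * X := by
      rw [mul_pow, Real.sq_sqrt (by positivity)]
      ring

end UpperBound

section CoprimePairs

open Finset

/-- The coprime pairs of integers in `(0, Y]²`. -/
def coprimePairs (Y : ℕ) : Finset (ℕ × ℕ) :=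
  {v ∈ Ioc 0 Y ×ˢ Ioc 0 Y | v.1.Coprime v.2}

lemma mem_coprimePairs {Y : ℕ} {v : ℕ × ℕ} :
    v ∈ coprimePairs Y ↔ ((0 < v.1 ∧ v.1 ≤ Y) ∧ 0 < v.2 ∧ v.2 ≤ Y) ∧ v.1.Coprime v.2 := by
  simp [coprimePairs]

lemma sum_Ioc_one_inv_sq_le (n : ℕ) : ∑ d ∈ Ioc 1 n, ((d : ℝ) ^ 2)⁻¹ ≤ 11 / 12 :=
  calc ∑ d ∈ Ioc 1 n, ((d : ℝ) ^ 2)⁻¹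
      ≤ ∑ d ∈ insert 2 (Ioo 2 (n + 1)), ((d : ℝ) ^ 2)⁻¹ :=
        sum_le_sum_of_subset_of_nonneg (fun d => by simp only [mem_Ioc, mem_insert, mem_Ioo]; lia)
          fun _ _ _ => by positivity
    _ ≤ 11 / 12 := by
        have := sum_Ioo_inv_sq_le (α := ℝ) 2 (n + 1)
        rw [sum_insert (by simp)]
        norm_num at this ⊢
        linarith

lemma card_filter_not_coprime_le (Y : ℕ) :
    (#{v ∈ Ioc 0 Y ×ˢ Ioc 0 Y | ¬ v.1.Coprime v.2} : ℝ) ≤ 11 / 12 * (Y : ℝ) ^ 2 := by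
  have hsub : {v ∈ Ioc 0 Y ×ˢ Ioc 0 Y | ¬ v.1.Coprime v.2} ⊆
      (Ioc 1 Y).biUnion fun d => {m ∈ Ioc 0 Y | d ∣ m} ×ˢ {n ∈ Ioc 0 Y | d ∣ n} := by
    rintro ⟨m, n⟩ hv
    simp only [mem_filter, mem_product, mem_Ioc] at hv
    obtain ⟨⟨⟨hm, hmY⟩, hn⟩, hcop⟩ := hv
    have hgcd : 1 < m.gcd n :=
      Nat.one_lt_iff_ne_zero_and_ne_one.2 ⟨Nat.gcd_ne_zero_left hm.ne', hcop⟩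
    have hle : m.gcd n ≤ Y := (Nat.gcd_le_left n hm).trans hmY
    simp only [mem_biUnion, mem_product, mem_filter, mem_Ioc]
    exact ⟨m.gcd n, ⟨hgcd, hle⟩, ⟨⟨hm, hmY⟩, Nat.gcd_dvd_left m n⟩, hn, Nat.gcd_dvd_right m n⟩
  calc (#{v ∈ Ioc 0 Y ×ˢ Ioc 0 Y | ¬ v.1.Coprime v.2} : ℝ)
      ≤ ∑ d ∈ Ioc 1 Y, ((Y / d : ℕ) : ℝ) ^ 2 := by
        have := (card_le_card hsub).trans card_biUnion_le
        simp only [card_product, Nat.Ioc_filter_dvd_card_eq_div, ← sq] at this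
        exact_mod_cast this
    _ ≤ ∑ d ∈ Ioc 1 Y, ((d : ℝ) ^ 2)⁻¹ * (Y : ℝ) ^ 2 := by
        refine sum_le_sum fun d _ => ?_
        rw [inv_mul_eq_div, ← div_pow]
        gcongr
        exact Nat.cast_div_le
    _ ≤ 11 / 12 * (Y : ℝ) ^ 2 := by
        rw [← sum_mul]
        gcongr
        exact sum_Ioc_one_inv_sq_le Y

lemma le_card_coprimePairs (Y : ℕ) : (Y : ℝ) ^ 2 / 12 ≤ #(coprimePairs Y) := by
  have hsplit : #(coprimePairs Y) + #{v ∈ Ioc 0 Y ×ˢ Ioc 0 Y | ¬ v.1.Coprime v.2} = Y ^ 2 := by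
    rw [coprimePairs, card_filter_add_card_filter_not, card_product, Nat.card_Ioc,
      Nat.sub_zero, sq]
  have hsplit' := congrArg (Nat.cast (R := ℝ)) hsplit
  push_cast at hsplit'
  linarith [card_filter_not_coprime_le Y]

lemma injOn_div_coprimePairs (Y : ℕ) :
    Set.InjOn (fun v : ℕ × ℕ => (v.1 / v.2 : ℚ)) (coprimePairs Y) := by
  rintro ⟨m, n⟩ hv ⟨m', n'⟩ hv' h
  obtain ⟨⟨-, hn, -⟩, hcop⟩ := mem_coprimePairs.1 hv
  obtain ⟨⟨-, hn', -⟩, hcop'⟩ := mem_coprimePairs.1 hv'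
  obtain ⟨hm, hn⟩ := Rat.div_int_inj (a := m) (b := n) (c := m') (d := n') (by exact_mod_cast hn)
    (by exact_mod_cast hn') (by simpa using hcop) (by simpa using hcop') (by simpa using h)
  exact Prod.ext (by exact_mod_cast hm) (by exact_mod_cast hn)

end CoprimePairs

section LowerBound

open Filter Polynomial

lemma le_natAbs_of_pow_dvd {u k : ℕ} {F : ℤ} (hF : F ≠ 0) (hk : k ≠ 0) (h : (u : ℤ) ^ k ∣ F) :
    u ≤ F.natAbs := by
  refine (Nat.le_self_pow hk u).trans (Nat.le_of_dvd (Int.natAbs_pos.2 hF) ?_)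
  simpa [Int.natAbs_pow] using Int.natAbs_dvd_natAbs.2 h

lemma exists_eq_pow_mul_and_not_pow_dvd {F G : ℤ} (h : F ≠ 0 ∨ G ≠ 0) {k l : ℕ} (hk : k ≠ 0)
    (hl : l ≠ 0) :
    ∃ u : ℕ, u ≠ 0 ∧ ∃ A B : ℤ, F = u ^ k * A ∧ G = u ^ l * B ∧
      ∀ p : ℕ, p.Prime → (p : ℤ) ^ k ∣ A → ¬ (p : ℤ) ^ l ∣ B := by
  let S : Set ℕ := {u | (u : ℤ) ^ k ∣ F ∧ (u : ℤ) ^ l ∣ G}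
  have hbdd : BddAbove S := by
    refine ⟨F.natAbs + G.natAbs, fun u hu => ?_⟩
    obtain hF | hG := h
    · exact le_add_right (le_natAbs_of_pow_dvd hF hk hu.1)
    · exact le_add_left (le_natAbs_of_pow_dvd hG hl hu.2)
  have hone : 1 ∈ S := by simp [S]
  have hmax : ∀ w ∈ S, w ≤ sSup S := fun w hw => le_csSup hbdd hw
  obtain ⟨⟨A, hA⟩, ⟨B, hB⟩⟩ := Nat.sSup_mem ⟨1, hone⟩ hbdd
  have hu : 0 < sSup S := hmax 1 hone
  refine ⟨sSup S, hu.ne', A, B, hA, hB, ?_⟩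
  rintro p hp ⟨A', rfl⟩ ⟨B', rfl⟩
  have hmem : sSup S * p ∈ S := by
    constructor
    · exact ⟨A', by rw [hA]; push_cast; ring⟩
    · exact ⟨B', by rw [hB]; push_cast; ring⟩
  exact (hmax _ hmem).not_gt (lt_mul_of_one_lt_right hu hp.one_lt)

lemma height_le_height_of_natCast_pow_mul {u : ℕ} (hu : u ≠ 0) (A B : ℝ) :
    height A B ≤ height (u ^ 4 * A) (u ^ 6 * B) := by
  have hnonneg : 0 ≤ height A B := by unfold height; positivity
  have hu1 : (1 : ℝ) ≤ u := by exact_mod_cast Nat.one_le_iff_ne_zero.2 hu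
  rw [height_pow_mul_pow_mul]
  exact le_mul_of_one_le_left hnonneg (one_le_pow₀ (hu1.trans (le_abs_self _)))

lemma height_forms_le {C : ℝ} {Y : ℕ} {v : ℕ × ℕ} (hC : 0 ≤ C) (hv : v ∈ coprimePairs Y)
    (hheight : ∀ v : ℝ × ℝ, height (formA v.1 v.2) (formB v.1 v.2) ≤ C * ‖v‖ ^ 2) :
    height (formA (v.1 : ℝ) v.2) (formB (v.1 : ℝ) v.2) ≤ C * Y ^ 2 := by
  obtain ⟨⟨⟨-, hm⟩, -, hn⟩, -⟩ := mem_coprimePairs.1 hv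
  refine (hheight (v.1, v.2)).trans ?_
  gcongr
  simpa [Prod.norm_def] using ⟨hm, hn⟩

lemma exists_mem_fiveTorsionPairs {X : ℝ} {m n : ℕ} (hm : m ≠ 0) (hn : n ≠ 0) (hX : 0 ≤ X)
    (hheight : height (formA (m : ℝ) n) (formB (m : ℝ) n) ≤ X) :
    ∃ q ∈ fiveTorsionPairs X,
      (q.1 : ℚ) ^ 3 * formB (m : ℚ) n ^ 2 = q.2 ^ 2 * formA (m : ℚ) n ^ 3 := by
  have hne : formA (m : ℤ) n ≠ 0 ∨ formB (m : ℤ) n ≠ 0 := by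
    by_contra! h
    exact hm (by exact_mod_cast (eq_zero_of_formA_eq_zero_of_formB_eq_zero h.1 h.2).1)
  obtain ⟨u, hu, A, B, hA, hB, hmin⟩ :=
    exists_eq_pow_mul_and_not_pow_dvd hne four_ne_zero (by norm_num : 6 ≠ 0)
  have hu0 : (u : ℚ) ≠ 0 := by exact_mod_cast hu
  have hAq : formA (m : ℚ) n = u ^ 4 * A := by simpa using congrArg (Int.cast (R := ℚ)) hA
  have hBq : formB (m : ℚ) n = u ^ 6 * B := by simpa using congrArg (Int.cast (R := ℚ)) hB
  have hAr : formA (m : ℝ) n = u ^ 4 * A := by simpa using congrArg (Int.cast (R := ℝ)) hA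
  have hBr : formB (m : ℝ) n = u ^ 6 * B := by simpa using congrArg (Int.cast (R := ℝ)) hB
  have hA' : (A : ℚ) = formA ((u : ℚ)⁻¹ * m) ((u : ℚ)⁻¹ * n) := by
    rw [formA_mul_mul, hAq]; field_simp
  have hB' : (B : ℚ) = formB ((u : ℚ)⁻¹ * m) ((u : ℚ)⁻¹ * n) := by
    rw [formB_mul_mul, hBq]; field_simp
  have ha : ((u : ℚ)⁻¹ * m) ≠ 0 := by positivity
  have hb : (u : ℚ)⁻¹ * n ≠ 0 := by positivity
  refine ⟨(A, B), ⟨?_, hmin, ?_, exists_five_torsion_iff.2 ⟨_, _, ha, hb, hA', hB'⟩⟩, ?_⟩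
  · have := discriminant_ne_zero ha hb
    rw [← hA', ← hB'] at this
    exact_mod_cast this
  · rw [← height_le_iff hX]
    refine (height_le_height_of_natCast_pow_mul hu A B).trans ?_
    rwa [← hAr, ← hBr]
  · rw [hAq, hBq]; ring

/-- The polynomial whose roots are the ratios `a / b` for which `y² = x³ + Ax + B` has the same
`j`-invariant as the curve with coefficients `formA a b` and `formB a b`. -/
noncomputable def fibrePolynomial (A B : ℚ) : ℚ[X] :=
  C (A ^ 3) * formB X 1 ^ 2 - C (B ^ 2) * formA X 1 ^ 3

lemma natDegree_fibrePolynomial_le (A B : ℚ) : (fibrePolynomial A B).natDegree ≤ 12 := by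
  unfold fibrePolynomial formA formB
  compute_degree

lemma eval_fibrePolynomial (A B t : ℚ) :
    (fibrePolynomial A B).eval t = A ^ 3 * formB t 1 ^ 2 - B ^ 2 * formA t 1 ^ 3 := by
  simp [fibrePolynomial, formA, formB]

lemma fibrePolynomial_ne_zero {A B : ℚ} (h : 4 * A ^ 3 + 27 * B ^ 2 ≠ 0) :
    fibrePolynomial A B ≠ 0 := by
  intro h0
  have heval : (fibrePolynomial A B).eval 0 = 729 * (4 * A ^ 3 + 27 * B ^ 2) := by
    rw [eval_fibrePolynomial]
    unfold formA formB
    ring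
  simp [h0, h] at heval

lemma isRoot_fibrePolynomial {A B m n : ℚ} (hn : n ≠ 0)
    (h : A ^ 3 * formB m n ^ 2 = B ^ 2 * formA m n ^ 3) :
    (fibrePolynomial A B).IsRoot (m / n) := by
  have hA : formA m n = n ^ 4 * formA (m / n) 1 := by
    rw [← formA_mul_mul, mul_one, mul_div_cancel₀ _ hn]
  have hB : formB m n = n ^ 6 * formB (m / n) 1 := by
    rw [← formB_mul_mul, mul_one, mul_div_cancel₀ _ hn]
  rw [IsRoot, eval_fibrePolynomial]
  refine mul_left_cancel₀ (pow_ne_zero 12 hn) ?_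
  rw [hA, hB] at h
  linear_combination h

lemma card_fibre_le {A B : ℚ} (h : 4 * A ^ 3 + 27 * B ^ 2 ≠ 0) {Y : ℕ} {T : Finset (ℕ × ℕ)}
    (hT : T ⊆ coprimePairs Y)
    (hrel : ∀ v ∈ T, A ^ 3 * formB (v.1 : ℚ) v.2 ^ 2 = B ^ 2 * formA (v.1 : ℚ) v.2 ^ 3) :
    T.card ≤ 12 := by
  have hroots : ∀ v ∈ T, (v.1 / v.2 : ℚ) ∈ (fibrePolynomial A B).roots.toFinset := by
    intro v hv
    obtain ⟨⟨-, hn, -⟩, -⟩ := mem_coprimePairs.1 (hT hv)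
    rw [Multiset.mem_toFinset, mem_roots (fibrePolynomial_ne_zero h)]
    exact isRoot_fibrePolynomial (by positivity) (hrel v hv)
  calc T.card ≤ (fibrePolynomial A B).roots.toFinset.card :=
        Finset.card_le_card_of_injOn _ hroots ((injOn_div_coprimePairs Y).mono hT)
    _ ≤ (fibrePolynomial A B).natDegree := (Multiset.toFinset_card_le _).trans (card_roots' _)
    _ ≤ 12 := natDegree_fibrePolynomial_le A B

lemma card_coprimePairs_le {C X : ℝ} {Y : ℕ} (hC : 0 ≤ C) (hX : C * Y ^ 2 ≤ X)
    (hheight : ∀ v : ℝ × ℝ, height (formA v.1 v.2) (formB v.1 v.2) ≤ C * ‖v‖ ^ 2) :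
    (coprimePairs Y).card ≤ 12 * (fiveTorsionPairs X).ncard := by
  classical
  have hX0 : 0 ≤ X := le_trans (by positivity) hX
  have hcurve : ∀ v ∈ coprimePairs Y, ∃ q ∈ fiveTorsionPairs X,
      (q.1 : ℚ) ^ 3 * formB (v.1 : ℚ) v.2 ^ 2 = q.2 ^ 2 * formA (v.1 : ℚ) v.2 ^ 3 := by
    intro v hv
    obtain ⟨⟨⟨hm, -⟩, hn, -⟩, -⟩ := mem_coprimePairs.1 hv
    exact exists_mem_fiveTorsionPairs hm.ne' hn.ne' hX0
      ((height_forms_le hC hv hheight).trans hX)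
  choose! f hf hrel using hcurve
  rw [Set.ncard_eq_toFinset_card _ (finite_fiveTorsionPairs hX0)]
  refine Finset.card_le_mul_card_image_of_maps_to (f := f)
    (fun v hv => by simpa using hf v hv) 12 ?_
  intro q hq
  have hdisc := ((Set.Finite.mem_toFinset _).1 hq).1
  refine card_fibre_le (A := q.1) (B := q.2) (by exact_mod_cast hdisc) (Finset.filter_subset _ _) ?_
  intro v hv
  obtain ⟨hvY, hfv⟩ := Finset.mem_filter.1 hv
  exact hfv ▸ hrel v hvY

lemma eventually_le_ncard_fiveTorsionPairs :
    ∃ c : ℝ, 0 < c ∧ ∀ᶠ X in atTop, c * X ≤ (fiveTorsionPairs X).ncard := by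
  obtain ⟨_, C, _, hC, hheight⟩ := exists_height_bounds
  refine ⟨1 / (576 * C), by positivity, ?_⟩
  filter_upwards [eventually_ge_atTop (4 * C)] with X hX
  have hXC : 4 ≤ X / C := (le_div_iff₀ hC).2 hX
  set t := √(X / C)
  have ht : t ^ 2 = X / C := Real.sq_sqrt (by positivity)
  have ht2 : 2 ≤ t := Real.le_sqrt_of_sq_le (by linarith)
  have hYX : C * (⌊t⌋₊ : ℝ) ^ 2 ≤ X :=
    calc C * (⌊t⌋₊ : ℝ) ^ 2 ≤ C * t ^ 2 := by
          gcongr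
          exact Nat.floor_le (by positivity)
      _ = X := by rw [ht, mul_div_cancel₀ _ hC.ne']
  have hcard : ((coprimePairs ⌊t⌋₊).card : ℝ) ≤ 12 * (fiveTorsionPairs X).ncard := by
    exact_mod_cast card_coprimePairs_le hC.le hYX fun v => (hheight v).2
  have hfloor : t / 2 ≤ ⌊t⌋₊ := by linarith [Nat.lt_floor_add_one t]
  calc 1 / (576 * C) * X = (t / 2) ^ 2 / 12 / 12 := by rw [div_pow, ht]; ring
    _ ≤ (⌊t⌋₊ : ℝ) ^ 2 / 12 / 12 := by gcongr
    _ ≤ (fiveTorsionPairs X).ncard := by linarith [le_card_coprimePairs ⌊t⌋₊]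

end LowerBound

end FiveTorsion

theorem count_five_torsion_curves :
    ∃ c₁ c₂ : ℝ, 0 < c₁ ∧ 0 < c₂ ∧ ∃ X₀ : ℝ, ∀ X : ℝ, X₀ ≤ X →
      c₁ * X ≤
        (Set.ncard {q : ℤ × ℤ | 4 * q.1 ^ 3 + 27 * q.2 ^ 2 ≠ 0 ∧
          (∀ p : ℕ, p.Prime → (p : ℤ) ^ 4 ∣ q.1 → ¬ (p : ℤ) ^ 6 ∣ q.2) ∧
          max ((|q.1| : ℝ) ^ 3) ((|q.2| : ℝ) ^ 2) ≤ X ^ 6 ∧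
          ∃ P : (EAB q.1 q.2).Point, P ≠ 0 ∧ 5 • P = 0} : ℝ) ∧
      (Set.ncard {q : ℤ × ℤ | 4 * q.1 ^ 3 + 27 * q.2 ^ 2 ≠ 0 ∧
          (∀ p : ℕ, p.Prime → (p : ℤ) ^ 4 ∣ q.1 → ¬ (p : ℤ) ^ 6 ∣ q.2) ∧
          max ((|q.1| : ℝ) ^ 3) ((|q.2| : ℝ) ^ 2) ≤ X ^ 6 ∧
          ∃ P : (EAB q.1 q.2).Point, P ≠ 0 ∧ 5 • P = 0} : ℝ) ≤ c₂ * X := by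
  obtain ⟨c₁, hc₁, hlower⟩ := FiveTorsion.eventually_le_ncard_fiveTorsionPairs
  obtain ⟨c₂, hc₂, hupper⟩ := FiveTorsion.eventually_ncard_fiveTorsionPairs_le
  obtain ⟨X₀, hX₀⟩ := Filter.eventually_atTop.1 (hlower.and hupper)
  exact ⟨c₁, c₂, hc₁, hc₂, X₀, hX₀⟩
end

section
/- There exist constants c₁, c₂ > 0 such that for all sufficiently large X, c₁·X^{1/2} ≤ #{(A,B) ∈ ℤ² : 4A³ + 27B² ≠ 0, for every prime p (p⁴ ∣ A implies p⁶ ∤ B), max(|A|³, |B|²) ≤ X⁶, and the elliptic curve E_{A,B}: y² = x³ + Ax + B has a rational point of order 7} ≤ c₂·X^{1/2}. -/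
/-! A curve with a rational point of order `7` is a fibre of the universal curve over `X₁(7)`, whose
Tate normal form has a single parameter `d`. Comparing `c₄` and `c₆` shows that `E_{A,B}` has such a
point exactly when `A = u⁴ A(d, 1)` and `B = u⁶ B(d, 1)` for explicit binary forms of degrees `8`
and `12`. With `d = t / s` in lowest terms, a minimal pair satisfies `n⁴ A = A(t, s)` and
`n⁶ B = B(t, s)` for an integer `n`. A Bézout identity between the two forms bounds `n`, and it
bounds `t` and `s` by a constant multiple of `Z = X^(1/4)`, so there are `O(Z²)` curves of height at
most `X`. Conversely each of the `≫ Z²` coprime pairs `(t, s)` of size `≪ Z` gives such a curve, and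
a curve arises from at most `24` pairs because `d` is a root of a nonzero polynomial of degree at
most `24` determined by `A` and `B`. -/

namespace SevenTorsion

section VariableChange

open WeierstrassCurve WeierstrassCurve.Affine

variable {F : Type*} [Field F] (C : VariableChange F) (W : Affine F)

/-- The abscissa on `W` of the point of `C • W` with abscissa `x`. -/
def substX (x : F) : F := C.u ^ 2 * x + C.r

/-- The ordinate on `W` of the point `(x, y)` of `C • W`. -/
def substY (x y : F) : F := C.u ^ 3 * y + C.u ^ 2 * C.s * x + C.t

variable {C} in
lemma substX_inj {x₁ x₂ : F} : substX C x₁ = substX C x₂ ↔ x₁ = x₂ := by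
  simp [substX]

variable {C} in
lemma substY_inj {x y₁ y₂ : F} : substY C x y₁ = substY C x y₂ ↔ y₁ = y₂ := by
  simp [substY]

lemma equation_subst_iff (x y : F) :
    W.Equation (substX C x) (substY C x y) ↔ Equation (C • W) x y := by
  have hu := C.u.ne_zero
  have key : substY C x y ^ 2 + W.a₁ * substX C x * substY C x y + W.a₃ * substY C x y -
      (substX C x ^ 3 + W.a₂ * substX C x ^ 2 + W.a₄ * substX C x + W.a₆) =
      (C.u : F) ^ 6 * (y ^ 2 + (C • W).a₁ * x * y + (C • W).a₃ * y -
        (x ^ 3 + (C • W).a₂ * x ^ 2 + (C • W).a₄ * x + (C • W).a₆)) := by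
    simp only [substX, substY, variableChange_def, Units.val_inv_eq_inv_val]
    field_simp
    ring
  rw [equation_iff', equation_iff', key, mul_eq_zero_iff_left (pow_ne_zero 6 hu)]

lemma nonsingular_subst_iff (x y : F) :
    W.Nonsingular (substX C x) (substY C x y) ↔ Nonsingular (C • W) x y := by
  have hu := C.u.ne_zero
  rw [nonsingular_iff', nonsingular_iff', equation_subst_iff]
  refine and_congr_right fun _ => ?_
  set dX := W.a₁ * substY C x y - (3 * substX C x ^ 2 + 2 * W.a₂ * substX C x + W.a₄) with hdX
  set dY := 2 * substY C x y + W.a₁ * substX C x + W.a₃ with hdY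
  have hX : (C • W).a₁ * y - (3 * x ^ 2 + 2 * (C • W).a₂ * x + (C • W).a₄) =
      (C.u : F)⁻¹ ^ 4 * (dX + C.s * dY) := by
    simp only [hdX, hdY, substX, substY, variableChange_def, Units.val_inv_eq_inv_val]
    field_simp
    ring
  have hY : 2 * y + (C • W).a₁ * x + (C • W).a₃ = (C.u : F)⁻¹ ^ 3 * dY := by
    simp only [hdY, substX, substY, variableChange_def, Units.val_inv_eq_inv_val]
    field_simp
    ring
  rw [hX, hY]
  by_cases h : dY = 0 <;> simp [h]

lemma negY_subst (x y : F) :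
    W.negY (substX C x) (substY C x y) = substY C x (negY (C • W) x y) := by
  simp only [negY, substX, substY, variableChange_def, Units.val_inv_eq_inv_val]
  field_simp
  ring

lemma addX_subst (x₁ x₂ l : F) : W.addX (substX C x₁) (substX C x₂) (C.u * l + C.s) =
    substX C (addX (C • W) x₁ x₂ l) := by
  simp only [addX, substX, variableChange_def, Units.val_inv_eq_inv_val]
  field_simp
  ring

lemma addY_subst (x₁ x₂ y₁ l : F) :
    W.addY (substX C x₁) (substX C x₂) (substY C x₁ y₁) (C.u * l + C.s) =
      substY C (addX (C • W) x₁ x₂ l) (addY (C • W) x₁ x₂ y₁ l) := by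
  rw [addY, addY, ← negY_subst, ← addX_subst]
  congr 1
  simp only [negAddY, addX, substX, substY, variableChange_def, Units.val_inv_eq_inv_val]
  field_simp
  ring

variable [DecidableEq F] {W}

lemma slope_subst {x₁ x₂ y₁ y₂ : F} (h₁ : Equation (C • W) x₁ y₁) (h₂ : Equation (C • W) x₂ y₂)
    (hxy : ¬(x₁ = x₂ ∧ y₁ = negY (C • W) x₂ y₂)) :
    W.slope (substX C x₁) (substX C x₂) (substY C x₁ y₁) (substY C x₂ y₂) =
      C.u * slope (C • W) x₁ x₂ y₁ y₂ + C.s := by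
  have hu := C.u.ne_zero
  by_cases hx : x₁ = x₂
  · subst hx
    have hy : y₁ ≠ negY (C • W) x₁ y₂ := fun h => hxy ⟨rfl, h⟩
    obtain rfl := Y_eq_of_Y_ne h₁ h₂ rfl hy
    rw [slope_of_Y_ne rfl hy, slope_of_Y_ne rfl (by rwa [negY_subst, Ne, substY_inj]),
      negY_subst]
    have hd := sub_ne_zero.2 hy
    rw [← mul_div_assoc, div_add' _ _ _ hd, div_eq_div_iff (by
      rw [substY, substY, add_sub_add_right_eq_sub, add_sub_add_right_eq_sub, ← mul_sub]
      exact mul_ne_zero (pow_ne_zero 3 hu) hd) hd]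
    simp only [negY, substX, substY, variableChange_def, Units.val_inv_eq_inv_val]
    field_simp
    ring
  · have hX : substX C x₁ ≠ substX C x₂ := mt substX_inj.1 hx
    have hd := sub_ne_zero.2 hx
    rw [slope_of_X_ne hx, slope_of_X_ne hX, ← mul_div_assoc, div_add' _ _ _ hd,
      div_eq_div_iff (sub_ne_zero.2 hX) hd]
    simp only [substX, substY]
    ring

variable (W) in
/-- The homomorphism from the points of `C • W` to those of `W` induced by the admissible change of
variables `C`. -/
def pointMap : Point (C • W) →+ W.Point where
  toFun
    | .zero => .zero
    | .some x y h => .some (substX C x) (substY C x y) ((nonsingular_subst_iff C W x y).2 h)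
  map_zero' := rfl
  map_add' := by
    rintro (_ | ⟨x₁, y₁, h₁⟩) (_ | ⟨x₂, y₂, h₂⟩)
    any_goals rfl
    by_cases hxy : x₁ = x₂ ∧ y₁ = negY (C • W) x₂ y₂
    · obtain ⟨rfl, hy⟩ := hxy
      rw [Point.add_of_Y_eq rfl hy, Point.add_of_Y_eq rfl (by rw [negY_subst, hy])]
      rfl
    · have hxy' : ¬(substX C x₁ = substX C x₂ ∧
          substY C x₁ y₁ = W.negY (substX C x₂) (substY C x₂ y₂)) := by
        rintro ⟨hx, hy⟩
        obtain rfl := substX_inj.1 hx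
        exact hxy ⟨rfl, substY_inj.1 (hy.trans (negY_subst C W x₁ y₂))⟩
      simp only [Point.add_some hxy, Point.add_some hxy', Point.some.injEq]
      rw [slope_subst C h₁.1 h₂.1 hxy, addX_subst, addY_subst]
      exact ⟨rfl, rfl⟩

lemma pointMap_some {x y : F} (h : Nonsingular (C • W) x y) : pointMap C W (.some x y h) =
    .some (substX C x) (substY C x y) ((nonsingular_subst_iff C W x y).2 h) := rfl

lemma pointMap_injective : Function.Injective (pointMap C W) := by
  rw [injective_iff_map_eq_zero]
  rintro (_ | ⟨x, y, h⟩) hP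
  · rfl
  · exact absurd hP (Point.some_ne_zero _)

end VariableChange

section TateNormalForm

open WeierstrassCurve WeierstrassCurve.Affine

variable {F : Type*} [Field F]

/-- Tate's normal form `y² + (1 - c)xy - by = x³ - bx²` of a curve with a marked point `(0, 0)` of
order different from `1`, `2` and `3`. -/
def tate (b c : F) : Affine F := ⟨1 - c, -b, -b, 0, 0⟩

/-- The fibre over `d` of the universal curve over `X₁(7)`: the Tate normal form in which `(0, 0)`
has order `7`. -/
def tateSeven (d : F) : Affine F := tate ((d ^ 2 - d) * d) (d ^ 2 - d)

lemma nonsingular_tate_zero {b c : F} : (tate b c).Nonsingular 0 0 ↔ b ≠ 0 := by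
  simp [nonsingular_zero, tate]

variable [DecidableEq F]

lemma some_add_some {W : Affine F} {x₁ x₂ x₃ y₁ y₂ y₃ l : F} (h₁ : W.Nonsingular x₁ y₁)
    (h₂ : W.Nonsingular x₂ y₂) (hxy : ¬(x₁ = x₂ ∧ y₁ = W.negY x₂ y₂))
    (hl : W.slope x₁ x₂ y₁ y₂ = l) (hx : W.addX x₁ x₂ l = x₃) (hy : W.addY x₁ x₂ y₁ l = y₃) :
    ∃ h₃, Point.some x₁ y₁ h₁ + .some x₂ y₂ h₂ = .some x₃ y₃ h₃ := by
  subst hl hx hy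
  exact ⟨_, Point.add_some hxy⟩

section MultiplesOfOrigin

variable {b c : F} (hO : (tate b c).Nonsingular 0 0)
include hO

lemma two_nsmul_origin : ∃ h, 2 • Point.some 0 0 hO = .some b (b * c) h := by
  have hb : b ≠ 0 := nonsingular_tate_zero.1 hO
  have hY : (0 : F) ≠ (tate b c).negY 0 0 := by simpa [tate] using hb.symm
  rw [two_nsmul]
  refine some_add_some (l := 0) hO hO (fun h => hY h.2) ?_ ?_ ?_
  · rw [slope_of_Y_ne rfl hY]
    simp [tate]
  · simp [addX, tate]
  · simp only [addY, negAddY, negY, addX, tate]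
    ring

lemma three_nsmul_origin : ∃ h, 3 • Point.some 0 0 hO = .some c (b - c) h := by
  have hb : b ≠ 0 := nonsingular_tate_zero.1 hO
  obtain ⟨h, h2⟩ := two_nsmul_origin hO
  rw [succ_nsmul', h2]
  refine some_add_some (l := c) hO h (fun h => hb h.1.symm) ?_ ?_ ?_
  · simp [slope_of_X_ne hb.symm, hb]
  · simp only [addX, tate]
    ring
  · simp only [addY, negAddY, negY, addX, tate]
    ring

lemma four_nsmul_origin {d : F} (hc : c ≠ 0) (hd : b = c * d) : ∃ h, 4 • Point.some 0 0 hO =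
    .some (d ^ 2 - d) (c * d - (d ^ 2 - d) * (d - c)) h := by
  obtain ⟨h, h3⟩ := three_nsmul_origin hO
  rw [succ_nsmul', h3]
  refine some_add_some (l := d - 1) hO h (fun h => hc h.1.symm) ?_ ?_ ?_
  · rw [slope_of_X_ne hc.symm, hd]
    field_simp
    ring
  · simp only [addX, tate, hd]
    ring
  · simp only [addY, negAddY, negY, addX, tate, hd]
    ring

lemma seven_nsmul_origin_eq_zero_iff :
    7 • Point.some 0 0 hO = 0 ↔ ∃ d, c = d ^ 2 - d ∧ b = c * d := by
  have hb : b ≠ 0 := nonsingular_tate_zero.1 hO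
  obtain ⟨h, h3⟩ := three_nsmul_origin hO
  rw [show 7 = 3 + 4 from rfl, add_nsmul, add_eq_zero_iff_eq_neg]
  constructor
  · intro h7
    have hc : c ≠ 0 := by
      rintro rfl
      have h3' : 3 • Point.some 0 0 hO = -Point.some 0 0 hO := by
        rw [h3, Point.neg_some, Point.some.injEq]
        simp [negY, tate]
      have h0 : 3 • Point.some 0 0 hO = 0 := by
        rw [h7, succ_nsmul, h3', neg_add_cancel, neg_zero]
      exact Point.some_ne_zero _ (h3.symm.trans h0)
    have hd : b = c * (b / c) := (mul_div_cancel₀ b hc).symm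
    obtain ⟨h', h4⟩ := four_nsmul_origin hO hc hd
    rw [h3, h4, Point.neg_some, Point.some.injEq] at h7
    exact ⟨b / c, h7.1, hd⟩
  · rintro ⟨d, hcd, hd⟩
    obtain ⟨h', h4⟩ := four_nsmul_origin hO (left_ne_zero_of_mul (hd ▸ hb)) hd
    rw [h3, h4, Point.neg_some, Point.some.injEq]
    refine ⟨hcd, ?_⟩
    simp only [negY, tate, ← hcd, hd]
    ring

end MultiplesOfOrigin

variable {W : Affine F}

lemma three_nsmul_eq_zero_of_flex {x y : F} (h : W.Nonsingular x y) (hY : y ≠ W.negY x y)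
    (hl : W.a₂ + 3 * x - W.a₁ * W.slope x x y y - W.slope x x y y ^ 2 = 0) :
    3 • Point.some x y h = 0 := by
  have hx : W.addX x x (W.slope x x y y) = x := by
    rw [addX]
    linear_combination -hl
  have h2 : 2 • Point.some x y h = .some x y h ∨ 2 • Point.some x y h = -.some x y h := by
    rw [two_nsmul, Point.add_self_of_Y_ne hY]
    exact Point.X_eq_iff.1 hx
  rw [succ_nsmul, add_eq_zero_iff_eq_neg]
  refine h2.resolve_left fun h2 => Point.some_ne_zero h ?_
  rwa [two_nsmul, add_eq_left] at h2

lemma exists_variableChange_eq_tate {P : W.Point} (h₂ : 2 • P ≠ 0) (h₃ : 3 • P ≠ 0) :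
    ∃ (C : VariableChange F) (b c : F), C • W = tate b c ∧
      ∃ hO : Nonsingular (C • W) 0 0, pointMap C W (.some 0 0 hO) = P := by
  obtain _ | ⟨x, y, h⟩ := P
  · exact absurd (nsmul_zero 2) h₂
  have hY : y ≠ W.negY x y := fun hY => h₂ (by rw [two_nsmul, Point.add_self_of_Y_eq hY])
  have hl : W.slope x x y y * (y - W.negY x y) =
      3 * x ^ 2 + 2 * W.a₂ * x + W.a₄ - W.a₁ * y := by
    rw [slope_of_Y_ne rfl hY, div_mul_cancel₀ _ (sub_ne_zero.2 hY)]
  have ha₂ := mt (three_nsmul_eq_zero_of_flex h hY) h₃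
  set l := W.slope x x y y
  have ha₃ : W.a₃ + x * W.a₁ + 2 * y ≠ 0 := by
    rw [← sub_ne_zero, negY] at hY
    ring_nf at hY ⊢
    exact hY
  -- Moving the point to the origin with horizontal tangent makes `a₄` and `a₆` vanish; the scaling
  -- then makes `a₂` and `a₃` equal.
  let C : VariableChange F := ⟨.mk0 _ (div_ne_zero ha₃ ha₂), x, l, y⟩
  have hO : Nonsingular (C • W) 0 0 := by
    rw [← nonsingular_subst_iff]
    simpa [substX, substY, C] using h
  refine ⟨C, -(C • W).a₃, 1 - (C • W).a₁, WeierstrassCurve.ext ?_ ?_ ?_ ?_ ?_, hO, ?_⟩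
  · simp [tate]
  · simp only [tate, C, variableChange_def, Units.val_inv_eq_inv_val, Units.val_mk0, neg_neg]
    field_simp
    ring
  · simp [tate]
  · rw [variableChange_a₄, tate, mul_eq_zero]
    right
    rw [negY] at hl
    linear_combination -hl
  · exact (nonsingular_zero.1 hO).1
  · simp [pointMap_some, substX, substY, C]

theorem exists_seven_torsion_iff : (∃ P : W.Point, P ≠ 0 ∧ 7 • P = 0) ↔
    ∃ (C : VariableChange F) (d : F), d ≠ 0 ∧ d ≠ 1 ∧ C • W = tateSeven d := by
  have transport {C : VariableChange F} {b c : F} (hC : C • W = tate b c)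
      (hO : Nonsingular (C • W) 0 0) :
      7 • Point.some 0 0 hO = 0 ↔ ∃ d, c = d ^ 2 - d ∧ b = c * d := by
    generalize C • W = W' at hC hO
    subst hC
    exact seven_nsmul_origin_eq_zero_iff hO
  constructor
  · rintro ⟨P, hP, h7⟩
    have h₂ : 2 • P ≠ 0 := fun h => hP (by rw [← h7, show 7 • P = 3 • 2 • P + P by abel, h]; simp)
    have h₃ : 3 • P ≠ 0 := fun h => hP (by rw [← h7, show 7 • P = 2 • 3 • P + P by abel, h]; simp)
    obtain ⟨C, b, c, hC, hO, rfl⟩ := exists_variableChange_eq_tate h₂ h₃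
    rw [← map_nsmul, map_eq_zero_iff _ (pointMap_injective C), transport hC hO] at h7
    obtain ⟨d, rfl, rfl⟩ := h7
    have hb := nonsingular_tate_zero.1 (hC ▸ hO)
    refine ⟨C, d, ?_, ?_, hC⟩ <;> rintro rfl <;> simp at hb
  · rintro ⟨C, d, hd₀, hd₁, hC⟩
    have hb : (d ^ 2 - d) * d ≠ 0 := by
      rw [show (d ^ 2 - d) * d = d ^ 2 * (d - 1) by ring]
      exact mul_ne_zero (pow_ne_zero 2 hd₀) (sub_ne_zero.2 hd₁)
    have hO : Nonsingular (C • W) 0 0 := hC ▸ nonsingular_tate_zero.2 hb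
    refine ⟨pointMap C W (.some 0 0 hO), Point.some_ne_zero _, ?_⟩
    rw [← map_nsmul, (transport hC hO).2 ⟨d, rfl, rfl⟩, map_zero]

end TateNormalForm

section BinaryForms

/-- The binary form `∑ᵢ aᵢ tⁱ sᵏ⁻ⁱ` of degree `k` with integer coefficients `a`. -/
def binaryForm {R : Type*} [Ring R] {k : ℕ} (a : Fin (k + 1) → ℤ) (t s : R) : R :=
  ∑ i, (a i : R) * t ^ (i : ℕ) * s ^ (k - i)

variable {k : ℕ} (a : Fin (k + 1) → ℤ)

lemma map_binaryForm {R S : Type*} [Ring R] [Ring S] (f : R →+* S) (t s : R) :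
    f (binaryForm a t s) = binaryForm a (f t) (f s) := by
  simp [binaryForm]

lemma binaryForm_mul_mul {R : Type*} [CommRing R] (c t s : R) :
    binaryForm a (c * t) (c * s) = c ^ k * binaryForm a t s := by
  rw [binaryForm, binaryForm, Finset.mul_sum]
  refine Finset.sum_congr rfl fun i _ => ?_
  rw [mul_pow, mul_pow, ← pow_mul_pow_sub c i.is_le]
  ring

lemma cast_binaryForm {K : Type*} [Field K] {t s : ℤ} (hs : (s : K) ≠ 0) :
    ((binaryForm a t s : ℤ) : K) = s ^ k * binaryForm a (t / s : K) 1 := by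
  rw [← binaryForm_mul_mul, mul_div_cancel₀ _ hs, mul_one]
  exact map_binaryForm a (Int.castRingHom K) t s

lemma abs_binaryForm_le {t s M : ℤ} (ht : |t| ≤ M) (hs : |s| ≤ M) :
    |binaryForm a t s| ≤ (∑ i, |a i|) * M ^ k := by
  rw [binaryForm, Finset.sum_mul]
  refine (Finset.abs_sum_le_sum_abs _ _).trans (Finset.sum_le_sum fun i _ => ?_)
  rw [Int.cast_id, abs_mul, abs_mul, abs_pow, abs_pow, mul_assoc, ← pow_mul_pow_sub M i.is_le]
  have hM := (abs_nonneg t).trans ht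
  gcongr

open Polynomial in
lemma natDegree_binaryForm_X_le {R : Type*} [Ring R] :
    (binaryForm a (X : R[X]) 1).natDegree ≤ k := by
  refine natDegree_sum_le_of_forall_le _ _ fun i _ => ?_
  rw [one_pow, mul_one, ← Polynomial.C_eq_intCast]
  exact (natDegree_C_mul_X_pow_le _ _).trans i.is_le

end BinaryForms

section ModularForms

/-- Coefficients of the form `A(t, s)` of degree `8` with `A(d, 1) = -27 c₄`, where `c₄` is the
invariant of `tateSeven d`. -/
def coeffA : Fin 9 → ℤ := ![-27, -108, 378, 0, -945, 1512, -1134, 324, -27]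

/-- Coefficients of the form `B(t, s)` of degree `12` with `B(d, 1) = -54 c₆`, where `c₆` is the
invariant of `tateSeven d`. -/
def coeffB : Fin 13 → ℤ :=
  ![54, 324, -810, -2484, 9396, -11988, 14742, -26244, 30780, -19116, 6318, -972, 54]

lemma binaryForm_coeffA {R : Type*} [CommRing R] (t s : R) : binaryForm coeffA t s =
    -27 * (t ^ 8 - 12 * t ^ 7 * s + 42 * t ^ 6 * s ^ 2 - 56 * t ^ 5 * s ^ 3 + 35 * t ^ 4 * s ^ 4 -
      14 * t ^ 2 * s ^ 6 + 4 * t * s ^ 7 + s ^ 8) := by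
  simp [binaryForm, coeffA, Fin.sum_univ_succ]
  ring

lemma binaryForm_coeffB {R : Type*} [CommRing R] (t s : R) : binaryForm coeffB t s =
    54 * (t ^ 12 - 18 * t ^ 11 * s + 117 * t ^ 10 * s ^ 2 - 354 * t ^ 9 * s ^ 3 +
      570 * t ^ 8 * s ^ 4 - 486 * t ^ 7 * s ^ 5 + 273 * t ^ 6 * s ^ 6 - 222 * t ^ 5 * s ^ 7 +
      174 * t ^ 4 * s ^ 8 - 46 * t ^ 3 * s ^ 9 - 15 * t ^ 2 * s ^ 10 + 6 * t * s ^ 11 +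
      s ^ 12) := by
  simp [binaryForm, coeffB, Fin.sum_univ_succ]
  ring

lemma c₄_tateSeven {F : Type*} [Field F] (d : F) :
    -27 * (tateSeven d).c₄ = binaryForm coeffA d 1 := by
  rw [binaryForm_coeffA]
  simp only [tateSeven, tate, WeierstrassCurve.c₄, WeierstrassCurve.b₂, WeierstrassCurve.b₄]
  ring

lemma c₆_tateSeven {F : Type*} [Field F] (d : F) :
    -54 * (tateSeven d).c₆ = binaryForm coeffB d 1 := by
  rw [binaryForm_coeffB]
  simp only [tateSeven, tate, WeierstrassCurve.c₆, WeierstrassCurve.b₂, WeierstrassCurve.b₄,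
    WeierstrassCurve.b₆]
  ring

lemma disc_binaryForm {R : Type*} [CommRing R] (t s : R) :
    4 * binaryForm coeffA t s ^ 3 + 27 * binaryForm coeffB t s ^ 2 =
      -(2 ^ 8 * 3 ^ 12) *
        (t ^ 7 * s ^ 7 * (t - s) ^ 7 * (t ^ 3 - 8 * t ^ 2 * s + 5 * t * s ^ 2 + s ^ 3)) := by
  rw [binaryForm_coeffA, binaryForm_coeffB]
  ring

end ModularForms

section ShortForms

open WeierstrassCurve

variable {F : Type*} [Field F]

lemma isShortNF_c₄_c₆_iff [Invertible (2 : F)] [Invertible (3 : F)] {W W' : WeierstrassCurve F}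
    [W.IsShortNF] [W'.IsShortNF] {v w : F} : W'.c₄ = v * W.c₄ ∧ W'.c₆ = w * W.c₆ ↔
      W'.a₄ = v * W.a₄ ∧ W'.a₆ = w * W.a₆ := by
  have h2 := Invertible.ne_zero (2 : F)
  have h3 := Invertible.ne_zero (3 : F)
  have h48 : (-48 : F) ≠ 0 := by
    rw [show (-48 : F) = -(2 ^ 4 * 3) by norm_num]
    simp [h2, h3]
  have h864 : (-864 : F) ≠ 0 := by
    rw [show (-864 : F) = -(2 ^ 5 * 3 ^ 3) by norm_num]
    simp [h2, h3]
  rw [c₄_of_isShortNF, c₄_of_isShortNF, c₆_of_isShortNF, c₆_of_isShortNF, mul_left_comm v,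
    mul_left_comm w, mul_right_inj' h48, mul_right_inj' h864]

lemma scaling_smul_of_isShortNF {W W' : WeierstrassCurve F} [W.IsShortNF] [W'.IsShortNF] {u : Fˣ}
    (h₄ : W'.a₄ = (u⁻¹ : Fˣ) ^ 4 * W.a₄) (h₆ : W'.a₆ = (u⁻¹ : Fˣ) ^ 6 * W.a₆) :
    (⟨u, 0, 0, 0⟩ : VariableChange F) • W = W' := by
  ext <;> simp [variableChange_def, h₄, h₆, a₂_of_isShortNF]

lemma exists_smul_eq_iff [Invertible (2 : F)] [Invertible (3 : F)] {W W' : WeierstrassCurve F} :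
    (∃ C : VariableChange F, C • W = W') ↔
      ∃ u : Fˣ, W'.c₄ = (u⁻¹ : Fˣ) ^ 4 * W.c₄ ∧ W'.c₆ = (u⁻¹ : Fˣ) ^ 6 * W.c₆ := by
  constructor
  · rintro ⟨C, rfl⟩
    exact ⟨C.u, variableChange_c₄ .., variableChange_c₆ ..⟩
  · rintro ⟨u, h₄, h₆⟩
    let N := W.toShortNF
    let N' := W'.toShortNF
    have : IsShortNF (N • W) := W.toShortNF_spec
    have : IsShortNF (N' • W') := W'.toShortNF_spec
    let D : VariableChange F := ⟨N'.u * u * N.u⁻¹, 0, 0, 0⟩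
    have hc : (N' • W').c₄ = (D.u⁻¹ : Fˣ) ^ 4 * (N • W).c₄ ∧
        (N' • W').c₆ = (D.u⁻¹ : Fˣ) ^ 6 * (N • W).c₆ := by
      simp only [variableChange_c₄, variableChange_c₆, h₄, h₆, D, mul_inv_rev, inv_inv,
        Units.val_mul, Units.val_inv_eq_inv_val]
      have := N.u.ne_zero
      constructor <;> field_simp
    have hD : D • N • W = N' • W' := by
      obtain ⟨ha₄, ha₆⟩ := isShortNF_c₄_c₆_iff.1 hc
      exact scaling_smul_of_isShortNF ha₄ ha₆
    exact ⟨N'⁻¹ * D * N, by rw [mul_smul, mul_smul, hD, inv_smul_smul]⟩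

variable {A B : ℤ}

instance isShortNF_EAB : IsShortNF (EAB A B) := ⟨rfl, rfl, rfl⟩

theorem seven_torsion_EAB_iff : (∃ P : (EAB A B).Point, P ≠ 0 ∧ 7 • P = 0) ↔
    ∃ u d : ℚ, u ≠ 0 ∧ d ≠ 0 ∧ d ≠ 1 ∧
      A = u ^ 4 * binaryForm coeffA d 1 ∧ B = u ^ 6 * binaryForm coeffB d 1 := by
  let := invertibleOfNonzero (two_ne_zero (α := ℚ))
  let := invertibleOfNonzero (three_ne_zero (α := ℚ))
  have hA : (EAB A B).c₄ = -48 * A := c₄_of_isShortNF _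
  have hB : (EAB A B).c₆ = -864 * B := c₆_of_isShortNF _
  -- The constants are absorbed into `u` because `48 * 27 = 6 ^ 4` and `864 * 54 = 6 ^ 6`.
  have rescale (u : ℚˣ) (d : ℚ) : ((tateSeven d).c₄ = (u⁻¹ : ℚˣ) ^ 4 * (EAB A B).c₄ ∧
      (tateSeven d).c₆ = (u⁻¹ : ℚˣ) ^ 6 * (EAB A B).c₆) ↔
      A = (u / 6 : ℚ) ^ 4 * binaryForm coeffA d 1 ∧
        B = (u / 6 : ℚ) ^ 6 * binaryForm coeffB d 1 := by
    rw [← c₄_tateSeven, ← c₆_tateSeven, hA, hB, Units.val_inv_eq_inv_val]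
    have := u.ne_zero
    constructor <;> rintro ⟨h₄, h₆⟩ <;> constructor <;> field_simp at h₄ h₆ ⊢ <;> linarith
  rw [exists_seven_torsion_iff, exists_comm]
  constructor
  · rintro ⟨d, C, hd₀, hd₁, hC⟩
    obtain ⟨u, hu⟩ := exists_smul_eq_iff.1 ⟨C, hC⟩
    exact ⟨u / 6, d, by simp, hd₀, hd₁, (rescale u d).1 hu⟩
  · rintro ⟨u, d, hu, hd₀, hd₁, h⟩
    have h6 : 6 * u ≠ 0 := by simpa
    obtain ⟨C, hC⟩ := exists_smul_eq_iff.2 ⟨.mk0 (6 * u) h6, (rescale (.mk0 (6 * u) h6) d).2 <| by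
      simpa [mul_div_cancel_left₀ u (by norm_num : (6 : ℚ) ≠ 0)] using h⟩
    exact ⟨d, C, hd₀, hd₁, hC⟩

end ShortForms

section MinimalPairs

/-- A pair `(A, B)` is minimal if no prime `p` satisfies `p ^ 4 ∣ A` and `p ^ 6 ∣ B`. -/
def IsMinimalPair (A B : ℤ) : Prop :=
  ∀ p : ℕ, p.Prime → (p : ℤ) ^ 4 ∣ A → ¬(p : ℤ) ^ 6 ∣ B

lemma exists_isMinimalPair {F G : ℤ} (h : F ≠ 0 ∨ G ≠ 0) :
    ∃ n A B : ℤ, 0 < n ∧ n ^ 4 * A = F ∧ n ^ 6 * B = G ∧ IsMinimalPair A B := by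
  classical
  let P : ℕ → Prop := fun n => (n : ℤ) ^ 4 ∣ F ∧ (n : ℤ) ^ 6 ∣ G
  have hpos : 0 < F.gcd G := Int.gcd_pos_iff.2 h
  have hle {n : ℕ} (hn : P n) : n ≤ F.gcd G :=
    Nat.le_of_dvd hpos <| Int.dvd_gcd ((dvd_pow_self _ four_ne_zero).trans hn.1)
      ((dvd_pow_self _ (by norm_num)).trans hn.2)
  set n := Nat.findGreatest P (F.gcd G)
  have h1 : P 1 := by simp [P]
  have hn0 : 0 < n := Nat.le_findGreatest (hle h1) h1
  obtain ⟨⟨A, hA⟩, ⟨B, hB⟩⟩ : P n := Nat.findGreatest_spec (hle h1) h1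
  refine ⟨n, A, B, mod_cast hn0, hA.symm, hB.symm, fun p hp hpA hpB => ?_⟩
  have hnp : P (n * p) := by
    simp only [P, Nat.cast_mul, mul_pow]
    exact ⟨hA ▸ mul_dvd_mul_left _ hpA, hB ▸ mul_dvd_mul_left _ hpB⟩
  have hmax : n * p ≤ n * 1 := by simpa using Nat.le_findGreatest (hle hnp) hnp
  exact hp.one_lt.not_ge (Nat.le_of_mul_le_mul_left hmax hn0)

lemma IsMinimalPair.exists_scaling {A B F G : ℤ} (h : IsMinimalPair A B) {w : ℚ}
    (hA : (A : ℚ) = w ^ 4 * F) (hB : (B : ℚ) = w ^ 6 * G) :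
    ∃ n : ℤ, 0 < n ∧ n ^ 4 * A = F ∧ n ^ 6 * B = G := by
  have clear {k : ℕ} {X Y : ℤ} (hXY : (X : ℚ) = w ^ k * Y) :
      (w.den : ℤ) ^ k * X = w.num ^ k * Y := by
    have : (w.den : ℚ) ^ k * X = w.num ^ k * Y := by
      rw [hXY, ← w.mul_den_eq_num]
      ring
    exact_mod_cast this
  have dvd_of_dvd_num {k p : ℕ} {X Y : ℤ} (hXY : (X : ℚ) = w ^ k * Y) (hp : (p : ℤ) ∣ w.num) :
      (p : ℤ) ^ k ∣ X := by
    have hcop : IsCoprime (p : ℤ) w.den := w.isCoprime_num_den.of_isCoprime_of_dvd_left hp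
    refine (hcop.pow (m := k) (n := k)).dvd_of_dvd_mul_left ?_
    rw [clear hXY]
    exact (pow_dvd_pow_of_dvd hp k).mul_right _
  have hnum : w.num.natAbs = 1 := by
    by_contra hne
    obtain ⟨p, hp, hpw⟩ := Nat.exists_prime_and_dvd hne
    rw [← Int.natCast_dvd] at hpw
    exact h p hp (dvd_of_dvd_num hA hpw) (dvd_of_dvd_num hB hpw)
  have hpow {k : ℕ} (hk : Even k) : w.num ^ k = 1 := by
    rw [← hk.pow_abs, Int.abs_eq_natAbs, hnum, Nat.cast_one, one_pow]
  refine ⟨w.den, mod_cast w.den_pos, ?_, ?_⟩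
  · rw [clear hA, hpow (by decide), one_mul]
  · rw [clear hB, hpow (by decide), one_mul]

end MinimalPairs

section Models

/-- The pair `(A, B)` arises from the parameter `t / s` by removing the common scaling
factor `n` of the forms `A(t, s)` and `B(t, s)`. -/
structure IsModel (n t s A B : ℤ) : Prop where
  eqA : n ^ 4 * A = binaryForm coeffA t s
  eqB : n ^ 6 * B = binaryForm coeffB t s

variable {A B n t s : ℤ}

lemma IsModel.eval (h : IsModel n t s A B) (hn : n ≠ 0) (hs : s ≠ 0) :
    (A : ℚ) = (s ^ 2 / n : ℚ) ^ 4 * binaryForm coeffA (t / s : ℚ) 1 ∧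
      (B : ℚ) = (s ^ 2 / n : ℚ) ^ 6 * binaryForm coeffB (t / s : ℚ) 1 := by
  have hn' : (n : ℚ) ≠ 0 := mod_cast hn
  have hs' : (s : ℚ) ≠ 0 := mod_cast hs
  have hA := congrArg (Int.cast : ℤ → ℚ) h.eqA
  have hB := congrArg (Int.cast : ℤ → ℚ) h.eqB
  rw [cast_binaryForm _ hs'] at hA hB
  push_cast at hA hB
  constructor <;> field_simp <;> linarith

theorem exists_isModel_of_seven_torsion (hmin : IsMinimalPair A B)
    (hP : ∃ P : (EAB A B).Point, P ≠ 0 ∧ 7 • P = 0) :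
    ∃ n t s : ℤ, 0 < n ∧ IsCoprime t s ∧ IsModel n t s A B := by
  obtain ⟨u, d, -, -, -, hA, hB⟩ := seven_torsion_EAB_iff.1 hP
  have hden : ((d.den : ℤ) : ℚ) ≠ 0 := mod_cast d.den_nz
  have hd : (d.num : ℚ) / (d.den : ℤ) = d := mod_cast d.num_div_den
  obtain ⟨n, hn, hA', hB'⟩ := hmin.exists_scaling (w := u / d.den ^ 2)
    (F := binaryForm coeffA d.num d.den) (G := binaryForm coeffB d.num d.den)
    (by rw [cast_binaryForm _ hden, hd, hA]; push_cast; field_simp)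
    (by rw [cast_binaryForm _ hden, hd, hB]; push_cast; field_simp)
  exact ⟨n, d.num, d.den, hn, d.isCoprime_num_den, hA', hB'⟩

theorem IsModel.exists_seven_torsion (h : IsModel n t s A B) (hn : n ≠ 0) (ht : t ≠ 0)
    (hs : s ≠ 0) (hts : t ≠ s) : ∃ P : (EAB A B).Point, P ≠ 0 ∧ 7 • P = 0 := by
  have hs' : (s : ℚ) ≠ 0 := mod_cast hs
  refine seven_torsion_EAB_iff.2 ⟨s ^ 2 / n, t / s, by simp [hn, hs], by simp [ht, hs], ?_,
    h.eval hn hs⟩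
  rw [Ne, div_eq_one_iff_eq hs']
  exact_mod_cast hts

end Models

section Bezout

/-- Coefficients of the cofactor of `A(t, s)` in `bezout_binaryForm`. -/
def bezoutA : Fin 12 → ℤ :=
  ![173436, 1076426, -2369074, -8392690, 28386864, -33198410, 41557418, -76509690, 84644424,
    -46703206, 12611838, -1150974]

/-- Coefficients of the cofactor of `B(t, s)` in `bezout_binaryForm`. -/
def bezoutB : Fin 8 → ℤ :=
  ![86718, 364777, -1133629, -207018, 2955183, -4298504, 2871141, -574479]

variable {R : Type*} [CommRing R] (t s : R)

lemma bezout_binaryForm : binaryForm bezoutA t s * binaryForm coeffA t s +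
    binaryForm bezoutB t s * binaryForm coeffB t s = 54432 * t ^ 19 := by
  rw [binaryForm_coeffA, binaryForm_coeffB]
  simp [binaryForm, bezoutA, bezoutB, Fin.sum_univ_succ]
  ring

-- The substitution `t / s ↦ s / (s - t)` is an automorphism of `X₁(7)` of order `3`; it replaces
-- the marked point by one of its multiples.
lemma binaryForm_coeffA_diamond : binaryForm coeffA s (s - t) = binaryForm coeffA t s := by
  rw [binaryForm_coeffA, binaryForm_coeffA]
  ring

lemma binaryForm_coeffB_diamond : binaryForm coeffB s (s - t) = binaryForm coeffB t s := by
  rw [binaryForm_coeffB, binaryForm_coeffB]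
  ring

end Bezout

section SizeBounds

lemma le_mul_of_pow_succ_le {M Z C D : ℝ} (hZ : 0 ≤ Z) (hC : 0 ≤ C) (hD : 0 ≤ D) {k i j : ℕ}
    (hi : i ≤ k) (hj : j ≤ k)
    (h : M ^ (k + 1) ≤ C * (M ^ i * Z ^ (k + 1 - i)) + D * (M ^ j * Z ^ (k + 1 - j))) :
    M ≤ (1 + C + D) * Z := by
  by_contra! hM
  have hZM : Z ≤ M := by nlinarith
  have hM0 : 0 < M := by
    refine (mul_nonneg ?_ hZ).trans_lt hM
    positivity
  have bound {l : ℕ} (hl : l ≤ k) : M ^ l * Z ^ (k + 1 - l) ≤ M ^ k * Z := by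
    rw [Nat.sub_add_comm hl, pow_succ, ← mul_assoc, ← pow_mul_pow_sub M hl]
    gcongr
  have hle : M ^ k * M ≤ M ^ k * ((C + D) * Z) := by
    calc M ^ k * M = M ^ (k + 1) := (pow_succ M k).symm
      _ ≤ C * (M ^ k * Z) + D * (M ^ k * Z) :=
        h.trans (add_le_add (mul_le_mul_of_nonneg_left (bound hi) hC)
          (mul_le_mul_of_nonneg_left (bound hj) hD))
      _ = M ^ k * ((C + D) * Z) := by ring
  linarith [le_of_mul_le_mul_left hle (pow_pos hM0 k)]

namespace IsModel

variable {A B n t s : ℤ}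

lemma diamond (h : IsModel n t s A B) : IsModel n s (s - t) A B :=
  ⟨h.eqA.trans (binaryForm_coeffA_diamond t s).symm,
    h.eqB.trans (binaryForm_coeffB_diamond t s).symm⟩

lemma bezout (h : IsModel n t s A B) : binaryForm bezoutA t s * (n ^ 4 * A) +
    binaryForm bezoutB t s * (n ^ 6 * B) = 54432 * t ^ 19 := by
  rw [h.eqA, h.eqB, bezout_binaryForm]

lemma dvd (h : IsModel n t s A B) (hts : IsCoprime t s) : n ∣ 54432 := by
  have dvd_mul_pow {t s : ℤ} (h : IsModel n t s A B) : n ∣ 54432 * t ^ 19 := by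
    rw [← h.bezout]
    exact dvd_add ((dvd_mul_of_dvd_left (dvd_pow_self n four_ne_zero) A).mul_left _)
      ((dvd_mul_of_dvd_left (dvd_pow_self n (by norm_num)) B).mul_left _)
  obtain ⟨x, y, hxy⟩ : IsCoprime (t ^ 19) (s ^ 19) := hts.pow
  have := dvd_add ((dvd_mul_pow h).mul_left x) ((dvd_mul_pow h.diamond).mul_left y)
  rwa [show x * (54432 * t ^ 19) + y * (54432 * s ^ 19) = 54432 * (x * t ^ 19 + y * s ^ 19) by
    ring, hxy, mul_one] at this

lemma pow_abs_le (h : IsModel n t s A B) {M : ℤ} (ht : |t| ≤ M) (hs : |s| ≤ M) :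
    54432 * |t| ^ 19 ≤ (∑ i, |bezoutA i|) * M ^ 11 * (n ^ 4 * |A|) +
      (∑ i, |bezoutB i|) * M ^ 7 * (n ^ 6 * |B|) := by
  have hn4 : |n ^ 4| = n ^ 4 := abs_of_nonneg (by positivity)
  have hn6 : |n ^ 6| = n ^ 6 := abs_of_nonneg (by positivity)
  have h1 := congrArg abs h.bezout
  rw [abs_mul, abs_pow, show |(54432 : ℤ)| = 54432 from rfl] at h1
  rw [← h1]
  refine (abs_add_le _ _).trans ?_
  rw [abs_mul, abs_mul, abs_mul, abs_mul, hn4, hn6]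
  gcongr
  · exact abs_binaryForm_le bezoutA ht hs
  · exact abs_binaryForm_le bezoutB ht hs

end IsModel

lemma IsModel.exists_abs_le : ∃ K : ℝ, 0 < K ∧ ∀ {n t s A B : ℤ} {Z : ℝ}, 0 ≤ Z → 0 < n →
    IsCoprime t s → IsModel n t s A B → |(A : ℝ)| ≤ Z ^ 8 → |(B : ℝ)| ≤ Z ^ 12 →
    |(t : ℝ)| ≤ K * Z ∧ |(s : ℝ)| ≤ K * Z := by
  set U : ℤ := ∑ i, |bezoutA i|
  set V : ℤ := ∑ i, |bezoutB i|
  have : (0 : ℝ) ≤ U := mod_cast Finset.sum_nonneg fun i _ => abs_nonneg (bezoutA i)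
  have : (0 : ℝ) ≤ V := mod_cast Finset.sum_nonneg fun i _ => abs_nonneg (bezoutB i)
  set C : ℝ := U * 2 ^ 11 * 54432 ^ 4
  set D : ℝ := V * 2 ^ 7 * 54432 ^ 6
  refine ⟨1 + C + D, by positivity, fun {n t s A B Z} hZ hn hts h hA hB => ?_⟩
  have hn' : (n : ℝ) ≤ 54432 := mod_cast Int.le_of_dvd (by norm_num) (h.dvd hts)
  have : (0 : ℝ) < n := mod_cast hn
  set M : ℤ := max |t| |s| with hM
  have htM : |t| ≤ M := le_max_left _ _
  have hsM : |s| ≤ M := le_max_right _ _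
  have hM0 : 0 ≤ M := (abs_nonneg t).trans htM
  have key : 54432 * M ^ 19 ≤
      U * (2 * M) ^ 11 * (n ^ 4 * |A|) + V * (2 * M) ^ 7 * (n ^ 6 * |B|) := by
    have hst : |s - t| ≤ 2 * M := (abs_sub _ _).trans (by linarith)
    rcases max_choice |t| |s| with hmax | hmax
    · nth_rewrite 1 [hM, hmax]
      exact h.pow_abs_le (by linarith) (by linarith)
    · nth_rewrite 1 [hM, hmax]
      exact h.diamond.pow_abs_le (by linarith) hst
  suffices (M : ℝ) ≤ (1 + C + D) * Z by
    constructor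
    · exact le_trans (mod_cast htM) this
    · exact le_trans (mod_cast hsM) this
  refine le_mul_of_pow_succ_le hZ (by positivity) (by positivity) (k := 18) (i := 11) (j := 7)
    (by norm_num) (by norm_num) ?_
  have : (0 : ℝ) ≤ M := mod_cast hM0
  calc (M : ℝ) ^ 19 ≤ 54432 * M ^ 19 := le_mul_of_one_le_left (by positivity) (by norm_num)
    _ ≤ U * (2 * M) ^ 11 * (n ^ 4 * |(A : ℝ)|) + V * (2 * M) ^ 7 * (n ^ 6 * |(B : ℝ)|) := by
      exact_mod_cast key
    _ ≤ U * (2 * M) ^ 11 * (54432 ^ 4 * Z ^ 8) + V * (2 * M) ^ 7 * (54432 ^ 6 * Z ^ 12) := by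
      gcongr
    _ = C * (M ^ 11 * Z ^ 8) + D * (M ^ 7 * Z ^ 12) := by
      simp only [C, D]
      ring

end SizeBounds

section CoprimePairs

/-- The pairs of coprime positive integers up to `Y`. -/
def coprimePairs (Y : ℕ) : Finset (ℕ × ℕ) :=
  {q ∈ Finset.Ioc 0 Y ×ˢ Finset.Ioc 0 Y | q.1.Coprime q.2}

lemma sum_Ioc_one_inv_sq_le (Y : ℕ) : ∑ g ∈ Finset.Ioc 1 Y, ((g : ℝ) ^ 2)⁻¹ ≤ 3 / 4 := by
  obtain hY | hY := lt_or_ge Y 2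
  · rw [Finset.Ioc_eq_empty (by omega)]
    norm_num
  · rw [← Finset.sum_Ioc_consecutive _ one_le_two hY]
    have h := sum_Ioc_inv_sq_le_sub (α := ℝ) two_ne_zero hY
    have h2 : ∑ g ∈ Finset.Ioc (1 : ℕ) 2, ((g : ℝ) ^ 2)⁻¹ = 1 / 4 := by
      rw [Finset.sum_Ioc_succ_top (by norm_num)]
      norm_num
    have hY' : (0 : ℝ) ≤ (Y : ℝ)⁻¹ := by positivity
    push_cast at h
    linarith

lemma card_filter_dvd_dvd (Y g : ℕ) :
    Finset.card {q ∈ Finset.Ioc 0 Y ×ˢ Finset.Ioc 0 Y | g ∣ q.1 ∧ g ∣ q.2} = (Y / g) ^ 2 := by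
  rw [Finset.filter_product, Finset.card_product, Nat.Ioc_filter_dvd_card_eq_div, sq]

lemma sq_le_card_coprimePairs_add (Y : ℕ) :
    Y ^ 2 ≤ (coprimePairs Y).card + ∑ g ∈ Finset.Ioc 1 Y, (Y / g) ^ 2 := by
  let box := Finset.Ioc 0 Y ×ˢ Finset.Ioc 0 Y
  let multiples (g : ℕ) : Finset (ℕ × ℕ) := {q ∈ box | g ∣ q.1 ∧ g ∣ q.2}
  have hcover : box ⊆ coprimePairs Y ∪ (Finset.Ioc 1 Y).biUnion multiples := by
    intro q hq
    have hq' := hq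
    simp only [box, Finset.mem_product, Finset.mem_Ioc] at hq'
    simp only [Finset.mem_union, coprimePairs, multiples, Finset.mem_filter, Finset.mem_biUnion,
      Finset.mem_Ioc]
    by_cases hc : q.1.Coprime q.2
    · exact .inl ⟨hq, hc⟩
    · have hpos := Nat.gcd_pos_of_pos_left q.2 hq'.1.1
      have hle := Nat.gcd_le_left q.2 hq'.1.1
      exact .inr ⟨q.1.gcd q.2, ⟨lt_of_le_of_ne hpos (Ne.symm hc), hle.trans hq'.1.2⟩, hq,
        Nat.gcd_dvd_left .., Nat.gcd_dvd_right ..⟩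
  calc Y ^ 2 = box.card := by rw [Finset.card_product, Nat.card_Ioc, Nat.sub_zero, sq]
    _ ≤ _ := (Finset.card_le_card hcover).trans (Finset.card_union_le _ _)
    _ ≤ _ := by
      gcongr
      exact Finset.card_biUnion_le.trans_eq
        (Finset.sum_congr rfl fun g _ => card_filter_dvd_dvd Y g)

lemma sq_div_four_le_card_coprimePairs (Y : ℕ) : (Y : ℝ) ^ 2 / 4 ≤ (coprimePairs Y).card := by
  have h : (Y : ℝ) ^ 2 ≤ (coprimePairs Y).card + ∑ g ∈ Finset.Ioc 1 Y, ((Y / g : ℕ) : ℝ) ^ 2 :=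
    mod_cast sq_le_card_coprimePairs_add Y
  have hsum : ∑ g ∈ Finset.Ioc 1 Y, ((Y / g : ℕ) : ℝ) ^ 2 ≤ Y ^ 2 * (3 / 4) :=
    calc _ ≤ ∑ g ∈ Finset.Ioc 1 Y, (Y : ℝ) ^ 2 * ((g : ℝ) ^ 2)⁻¹ := by
          refine Finset.sum_le_sum fun g _ => ?_
          rw [← div_eq_mul_inv, ← div_pow]
          gcongr
          exact Nat.cast_div_le
      _ ≤ Y ^ 2 * (3 / 4) := by
          rw [← Finset.mul_sum]
          gcongr
          exact sum_Ioc_one_inv_sq_le Y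
  linarith

end CoprimePairs

section UpperBound

/-- The minimal pairs `(A, B)` of height at most `X` whose elliptic curve has a rational point of
order `7`. -/
def sevenTorsionCurves (X : ℝ) : Set (ℤ × ℤ) :=
  {q | 4 * q.1 ^ 3 + 27 * q.2 ^ 2 ≠ 0 ∧ IsMinimalPair q.1 q.2 ∧
    max ((|q.1| : ℝ) ^ 3) ((|q.2| : ℝ) ^ 2) ≤ X ^ 6 ∧
    ∃ P : (EAB q.1 q.2).Point, P ≠ 0 ∧ 7 • P = 0}

lemma max_le_pow_iff {a b Z : ℝ} (ha : 0 ≤ a) (hb : 0 ≤ b) :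
    max (a ^ 3) (b ^ 2) ≤ (Z ^ 4) ^ 6 ↔ a ≤ Z ^ 8 ∧ b ≤ Z ^ 12 := by
  rw [max_le_iff, show (Z ^ 4) ^ 6 = (Z ^ 8) ^ 3 by ring, pow_le_pow_iff_left₀ ha (by positivity)
    three_ne_zero, show (Z ^ 8) ^ 3 = (Z ^ 12) ^ 2 by ring, pow_le_pow_iff_left₀ hb (by positivity)
    two_ne_zero]

lemma IsModel.eq_ediv {n t s A B : ℤ} (h : IsModel n t s A B) (hn : n ≠ 0) :
    A = binaryForm coeffA t s / n ^ 4 ∧ B = binaryForm coeffB t s / n ^ 6 :=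
  ⟨Int.eq_ediv_of_mul_eq_right (pow_ne_zero 4 hn) h.eqA,
    Int.eq_ediv_of_mul_eq_right (pow_ne_zero 6 hn) h.eqB⟩

lemma mem_Icc_neg_floor_floor_iff {x : ℤ} {R : ℝ} :
    x ∈ Finset.Icc (-⌊R⌋) ⌊R⌋ ↔ |(x : ℝ)| ≤ R := by
  rw [Finset.mem_Icc, ← abs_le, Int.le_floor, Int.cast_abs]

lemma card_Icc_neg_floor_floor_le {R : ℝ} (hR : 0 ≤ R) :
    ((Finset.Icc (-⌊R⌋) ⌊R⌋).card : ℝ) ≤ 2 * R + 1 := by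
  have hfloor : 0 ≤ ⌊R⌋ := Int.floor_nonneg.2 hR
  rw [Int.card_Icc, ← Int.cast_natCast, Int.toNat_of_nonneg (by omega)]
  push_cast
  linarith [Int.floor_le R]

lemma finite_and_ncard_le_of_forall_isModel {S : Set (ℤ × ℤ)} {I J : Finset ℤ} (hJ : 0 ∉ J)
    (h : ∀ q ∈ S, ∃ n ∈ J, ∃ t ∈ I, ∃ s ∈ I, IsModel n t s q.1 q.2) :
    S.Finite ∧ S.ncard ≤ I.card ^ 2 * J.card := by
  classical
  let curve : ℤ × ℤ × ℤ → ℤ × ℤ := fun ⟨t, s, n⟩ =>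
    (binaryForm coeffA t s / n ^ 4, binaryForm coeffB t s / n ^ 6)
  have hsub : S ⊆ (I ×ˢ I ×ˢ J).image curve := by
    intro q hq
    obtain ⟨n, hn, t, ht, s, hs, hmodel⟩ := h q hq
    obtain ⟨hA, hB⟩ := hmodel.eq_ediv (ne_of_mem_of_not_mem hn hJ)
    exact Finset.mem_coe.2 <| Finset.mem_image.2
      ⟨(t, s, n), by simp [ht, hs, hn], Prod.ext hA.symm hB.symm⟩
  refine ⟨(Finset.finite_toSet _).subset hsub, ?_⟩
  calc S.ncard ≤ ((I ×ˢ I ×ˢ J).image curve).card := by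
        rw [← Set.ncard_coe_finset]
        exact Set.ncard_le_ncard hsub (Finset.finite_toSet _)
    _ ≤ (I ×ˢ I ×ˢ J).card := Finset.card_image_le
    _ = I.card ^ 2 * J.card := by rw [Finset.card_product, Finset.card_product, sq, mul_assoc]

theorem exists_ncard_sevenTorsionCurves_le : ∃ c : ℝ, 0 < c ∧ ∀ Z : ℝ, 1 ≤ Z →
    (sevenTorsionCurves (Z ^ 4)).Finite ∧ (sevenTorsionCurves (Z ^ 4)).ncard ≤ c * Z ^ 2 := by
  obtain ⟨K, hK, hsize⟩ := IsModel.exists_abs_le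
  refine ⟨(2 * K + 1) ^ 2 * 54432, by positivity, fun Z hZ => ?_⟩
  let I : Finset ℤ := Finset.Icc (-⌊K * Z⌋) ⌊K * Z⌋
  let J : Finset ℤ := Finset.Icc 1 54432
  have hmodel : ∀ q ∈ sevenTorsionCurves (Z ^ 4),
      ∃ n ∈ J, ∃ t ∈ I, ∃ s ∈ I, IsModel n t s q.1 q.2 := by
    rintro ⟨A, B⟩ ⟨-, hmin, hheight, hP⟩
    obtain ⟨n, t, s, hn, hts, h⟩ := exists_isModel_of_seven_torsion hmin hP
    rw [max_le_pow_iff (abs_nonneg _) (abs_nonneg _)] at hheight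
    obtain ⟨ht, hs⟩ := hsize (by positivity) hn hts h hheight.1 hheight.2
    exact ⟨n, Finset.mem_Icc.2 ⟨hn, Int.le_of_dvd (by norm_num) (h.dvd hts)⟩,
      t, mem_Icc_neg_floor_floor_iff.2 ht, s, mem_Icc_neg_floor_floor_iff.2 hs, h⟩
  obtain ⟨hfin, hncard⟩ := finite_and_ncard_le_of_forall_isModel (by simp [J]) hmodel
  have hJ : J.card = 54432 := by
    rw [Int.card_Icc]
    rfl
  have hI : (I.card : ℝ) ≤ (2 * K + 1) * Z := by
    linarith [card_Icc_neg_floor_floor_le (R := K * Z) (by positivity)]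
  refine ⟨hfin, ?_⟩
  calc ((sevenTorsionCurves (Z ^ 4)).ncard : ℝ) ≤ I.card ^ 2 * 54432 := by
        rw [hJ] at hncard
        exact_mod_cast hncard
    _ ≤ ((2 * K + 1) * Z) ^ 2 * 54432 :=
      mul_le_mul_of_nonneg_right (pow_le_pow_left₀ (Nat.cast_nonneg _) hI 2) (by norm_num)
    _ = (2 * K + 1) ^ 2 * 54432 * Z ^ 2 := by ring

end UpperBound

section LowerBound

open Polynomial

lemma abs_binaryForm_le_mul_pow {k : ℕ} {a : Fin (k + 1) → ℤ} {t s L M : ℤ} (hk : k ≠ 0)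
    (hL : 1 ≤ L) (ha : ∑ i, |a i| ≤ L) (ht : |t| ≤ M) (hs : |s| ≤ M) :
    |binaryForm a t s| ≤ (L * M) ^ k := by
  have hM : 0 ≤ M := (abs_nonneg t).trans ht
  calc |binaryForm a t s| ≤ (∑ i, |a i|) * M ^ k := abs_binaryForm_le a ht hs
    _ ≤ L ^ k * M ^ k := by
      gcongr
      exact ha.trans (le_self_pow₀ hL hk)
    _ = (L * M) ^ k := (mul_pow L M k).symm

lemma disc_cubic_ne_zero {t s : ℤ} (h : IsCoprime t s) :
    t ^ 3 - 8 * t ^ 2 * s + 5 * t * s ^ 2 + s ^ 3 ≠ 0 := by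
  intro h0
  have even_of_eq_zero : ∀ x y : ZMod 2, x ^ 3 - 8 * x ^ 2 * y + 5 * x * y ^ 2 + y ^ 3 = 0 →
      x = 0 ∧ y = 0 := by decide
  obtain ⟨ht, hs⟩ := even_of_eq_zero t s (by exact_mod_cast congrArg (Int.cast : ℤ → ZMod 2) h0)
  rw [ZMod.intCast_zmod_eq_zero_iff_dvd] at ht hs
  exact absurd (h.isUnit_of_dvd' ht hs) (by decide)

lemma disc_binaryForm_ne_zero {t s : ℤ} (h : IsCoprime t s) (ht : t ≠ 0) (hs : s ≠ 0)
    (hts : t ≠ s) : 4 * binaryForm coeffA t s ^ 3 + 27 * binaryForm coeffB t s ^ 2 ≠ 0 := by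
  rw [disc_binaryForm]
  simp [ht, hs, sub_ne_zero.2 hts, disc_cubic_ne_zero h]

lemma exists_isModel {t s : ℤ}
    (h : 4 * binaryForm coeffA t s ^ 3 + 27 * binaryForm coeffB t s ^ 2 ≠ 0) :
    ∃ n A B : ℤ, 0 < n ∧ IsMinimalPair A B ∧ 4 * A ^ 3 + 27 * B ^ 2 ≠ 0 ∧ IsModel n t s A B := by
  have hne : binaryForm coeffA t s ≠ 0 ∨ binaryForm coeffB t s ≠ 0 := by
    by_contra! h0
    simp [h0] at h
  obtain ⟨n, A, B, hn, hA, hB, hmin⟩ := exists_isMinimalPair hne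
  refine ⟨n, A, B, hn, hmin, fun h0 => h ?_, hA, hB⟩
  rw [← hA, ← hB]
  linear_combination n ^ 12 * h0

lemma IsModel.abs_le {n t s A B : ℤ} (h : IsModel n t s A B) (hn : 0 < n) :
    |A| ≤ |binaryForm coeffA t s| ∧ |B| ≤ |binaryForm coeffB t s| := by
  have le_abs_mul (k : ℕ) (x : ℤ) : |x| ≤ |n ^ k * x| := by
    rw [abs_mul]
    exact le_mul_of_one_le_left (abs_nonneg x) (Int.one_le_abs (pow_pos hn k).ne')
  rw [← h.eqA, ← h.eqB]
  exact ⟨le_abs_mul 4 A, le_abs_mul 6 B⟩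

/-- The polynomial of degree at most `24` over `ℚ` whose roots include every `t / s` for which
`(A, B)` has a model with parameters `t` and `s`: it vanishes at `d` when `A(d, 1) ^ 3` and
`B(d, 1) ^ 2` are in the ratio `A ^ 3 : B ^ 2`. -/
noncomputable def parameterPolynomial (A B : ℤ) : ℚ[X] :=
  C ((A : ℚ) ^ 3) * binaryForm coeffB X 1 ^ 2 - C ((B : ℚ) ^ 2) * binaryForm coeffA X 1 ^ 3

lemma eval_parameterPolynomial (A B : ℤ) (d : ℚ) : (parameterPolynomial A B).eval d =
    A ^ 3 * binaryForm coeffB d 1 ^ 2 - B ^ 2 * binaryForm coeffA d 1 ^ 3 := by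
  have eval_form {k : ℕ} (a : Fin (k + 1) → ℤ) :
      (binaryForm a (X : ℚ[X]) 1).eval d = binaryForm a d 1 := by
    simpa using map_binaryForm a (evalRingHom d) X 1
  simp [parameterPolynomial, eval_form]

lemma natDegree_parameterPolynomial_le (A B : ℤ) : (parameterPolynomial A B).natDegree ≤ 24 :=
  natDegree_sub_le_of_le
    ((natDegree_C_mul_le _ _).trans (natDegree_pow_le_of_le 2 (natDegree_binaryForm_X_le coeffB)))
    ((natDegree_C_mul_le _ _).trans (natDegree_pow_le_of_le 3 (natDegree_binaryForm_X_le coeffA)))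

lemma parameterPolynomial_ne_zero {A B : ℤ} (h : 4 * A ^ 3 + 27 * B ^ 2 ≠ 0) :
    parameterPolynomial A B ≠ 0 := by
  intro h0
  have heval := eval_parameterPolynomial A B 0
  rw [h0, eval_zero, binaryForm_coeffA, binaryForm_coeffB] at heval
  have : (4 * A ^ 3 + 27 * B ^ 2 : ℚ) = 0 := by linarith
  exact h (mod_cast this)

lemma IsModel.isRoot_parameterPolynomial {n t s A B : ℤ} (h : IsModel n t s A B) (hn : n ≠ 0)
    (hs : s ≠ 0) : (parameterPolynomial A B).IsRoot (t / s) := by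
  obtain ⟨hA, hB⟩ := h.eval hn hs
  rw [IsRoot.def, eval_parameterPolynomial, hA, hB]
  ring

lemma injOn_div_coprimePairs (Y : ℕ) :
    Set.InjOn (fun q : ℕ × ℕ => (q.1 / q.2 : ℚ)) (coprimePairs Y) := by
  rintro ⟨a, b⟩ hq ⟨a', b'⟩ hq' heq
  simp only [coprimePairs, Finset.mem_coe, Finset.mem_filter, Finset.mem_product,
    Finset.mem_Ioc] at hq hq'
  obtain ⟨ha, hb⟩ := Rat.div_int_inj (a := a) (b := b) (c := a') (d := b') (mod_cast hq.1.2.1)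
    (mod_cast hq'.1.2.1) hq.2 hq'.2 (by simpa using heq)
  exact Prod.ext (mod_cast ha) (mod_cast hb)

lemma card_filter_isModel_le (Y : ℕ) {A B : ℤ} (h : 4 * A ^ 3 + 27 * B ^ 2 ≠ 0)
    [DecidablePred fun q : ℕ × ℕ => ∃ n : ℤ, n ≠ 0 ∧ IsModel n (-q.1) q.2 A B] :
    Finset.card {q ∈ coprimePairs Y | ∃ n : ℤ, n ≠ 0 ∧ IsModel n (-q.1) q.2 A B} ≤ 24 := by
  calc _ ≤ (parameterPolynomial A B).roots.toFinset.card := by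
        refine Finset.card_le_card_of_injOn (fun q => -(q.1 / q.2 : ℚ)) ?_ ?_
        · intro q hq
          obtain ⟨hq, n, hn, hmodel⟩ := Finset.mem_filter.1 hq
          have hq2 : (q.2 : ℤ) ≠ 0 := by
            simp only [coprimePairs, Finset.mem_filter, Finset.mem_product, Finset.mem_Ioc] at hq
            omega
          rw [Finset.mem_coe, Multiset.mem_toFinset, mem_roots (parameterPolynomial_ne_zero h)]
          simpa [neg_div] using hmodel.isRoot_parameterPolynomial hn hq2
        · exact neg_injective.comp_injOn
            ((injOn_div_coprimePairs Y).mono (Finset.filter_subset _ _))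
    _ ≤ (parameterPolynomial A B).natDegree :=
      (Multiset.toFinset_card_le _).trans (card_roots' _)
    _ ≤ 24 := natDegree_parameterPolynomial_le A B

lemma exists_isModel_mem_sevenTorsionCurves {Y : ℕ} {Z : ℝ} (hZ : 123282 * Y ≤ Z) {q : ℕ × ℕ}
    (hq : q ∈ coprimePairs Y) : ∃ n A B : ℤ, n ≠ 0 ∧ IsModel n (-q.1) q.2 A B ∧
      (A, B) ∈ sevenTorsionCurves (Z ^ 4) := by
  obtain ⟨a, b⟩ := q
  simp only [coprimePairs, Finset.mem_filter, Finset.mem_product, Finset.mem_Ioc] at hq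
  obtain ⟨⟨⟨ha, haY⟩, hb, hbY⟩, hab⟩ := hq
  have ht : (-a : ℤ) ≠ 0 := by omega
  have hs : (b : ℤ) ≠ 0 := by omega
  have hts : (-a : ℤ) ≠ b := by omega
  have hcop : IsCoprime (-a : ℤ) b := hab.isCoprime.neg_left
  obtain ⟨n, A, B, hn, hmin, hdisc, h⟩ := exists_isModel (disc_binaryForm_ne_zero hcop ht hs hts)
  refine ⟨n, A, B, hn.ne', h, hdisc, hmin, ?_, h.exists_seven_torsion hn.ne' ht hs hts⟩
  have abs_le_pow {k : ℕ} {c : Fin (k + 1) → ℤ} {x : ℤ} (hk : k ≠ 0) (hc : ∑ i, |c i| ≤ 123282)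
      (hx : |x| ≤ |binaryForm c (-a : ℤ) b|) : |(x : ℝ)| ≤ Z ^ k := by
    have := hx.trans (abs_binaryForm_le_mul_pow (M := Y) hk (by norm_num) hc
      (by simpa using haY) (by simpa using hbY))
    calc |(x : ℝ)| ≤ (123282 * Y) ^ k := mod_cast this
      _ ≤ Z ^ k := by gcongr
  rw [max_le_pow_iff (abs_nonneg _) (abs_nonneg _)]
  exact ⟨abs_le_pow (by norm_num) (by decide) (h.abs_le hn).1,
    abs_le_pow (by norm_num) (by decide) (h.abs_le hn).2⟩

lemma card_coprimePairs_le {Y : ℕ} {Z : ℝ} (hZ : 123282 * Y ≤ Z)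
    (hfin : (sevenTorsionCurves (Z ^ 4)).Finite) :
    (coprimePairs Y).card ≤ (sevenTorsionCurves (Z ^ 4)).ncard * 24 := by
  classical
  let parametrizes (q : ℕ × ℕ) (r : ℤ × ℤ) : Prop := ∃ n : ℤ, n ≠ 0 ∧ IsModel n (-q.1) q.2 r.1 r.2
  rw [Set.ncard_eq_toFinset_card _ hfin, ← mul_one (coprimePairs Y).card]
  refine Finset.card_mul_le_card_mul parametrizes (fun q hq => ?_) fun r hr => ?_
  · obtain ⟨n, A, B, hn, h, hmem⟩ := exists_isModel_mem_sevenTorsionCurves hZ hq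
    exact Finset.card_pos.2 ⟨(A, B),
      Finset.mem_filter.2 ⟨hfin.mem_toFinset.2 hmem, n, hn, h⟩⟩
  · exact card_filter_isModel_le Y (hfin.mem_toFinset.1 hr).1

theorem exists_le_ncard_sevenTorsionCurves : ∃ c : ℝ, 0 < c ∧ ∃ Z₀ : ℝ, ∀ Z : ℝ, Z₀ ≤ Z →
    (sevenTorsionCurves (Z ^ 4)).Finite → c * Z ^ 2 ≤ (sevenTorsionCurves (Z ^ 4)).ncard := by
  refine ⟨(2 * 123282)⁻¹ ^ 2 / 96, by positivity, 123282, fun Z hZ hfin => ?_⟩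
  let Y := ⌊Z / 123282⌋₊
  have hYZ : 123282 * (Y : ℝ) ≤ Z := by
    have : (Y : ℝ) ≤ Z / 123282 := Nat.floor_le (by positivity)
    linarith
  have hZY : (2 * 123282)⁻¹ * Z ≤ Y := by
    have h1 : Z / 123282 < Y + 1 := Nat.lt_floor_add_one _
    have h2 : (1 : ℝ) ≤ Y := mod_cast Nat.le_floor (by rw [Nat.cast_one]; linarith)
    linarith
  have hcard : ((coprimePairs Y).card : ℝ) ≤ (sevenTorsionCurves (Z ^ 4)).ncard * 24 :=
    mod_cast card_coprimePairs_le hYZ hfin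
  have hsq : ((2 * 123282)⁻¹ * Z) ^ 2 ≤ (Y : ℝ) ^ 2 := by gcongr
  linarith [sq_div_four_le_card_coprimePairs Y]

lemma exists_pow_four_eq_of_le {M X : ℝ} (hM : 0 ≤ M) (hX : M ^ 4 ≤ X) :
    ∃ Z, M ≤ Z ∧ Z ^ 4 = X ∧ √X = Z ^ 2 := by
  have hroot : √√X ^ 4 = X := by
    rw [show √√X ^ 4 = (√√X ^ 2) ^ 2 by ring, Real.sq_sqrt (Real.sqrt_nonneg X),
      Real.sq_sqrt ((pow_nonneg hM 4).trans hX)]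
  exact ⟨√√X, le_of_pow_le_pow_left₀ four_ne_zero (Real.sqrt_nonneg _) (hX.trans_eq hroot.symm),
    hroot, (Real.sq_sqrt (Real.sqrt_nonneg X)).symm⟩

end LowerBound

end SevenTorsion

open SevenTorsion in
theorem count_seven_torsion_curves :
    ∃ c₁ c₂ : ℝ, 0 < c₁ ∧ 0 < c₂ ∧ ∃ X₀ : ℝ, ∀ X : ℝ, X₀ ≤ X →
      c₁ * Real.sqrt X ≤
        (Set.ncard {q : ℤ × ℤ | 4 * q.1 ^ 3 + 27 * q.2 ^ 2 ≠ 0 ∧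
          (∀ p : ℕ, p.Prime → (p : ℤ) ^ 4 ∣ q.1 → ¬ (p : ℤ) ^ 6 ∣ q.2) ∧
          max ((|q.1| : ℝ) ^ 3) ((|q.2| : ℝ) ^ 2) ≤ X ^ 6 ∧
          ∃ P : (EAB q.1 q.2).Point, P ≠ 0 ∧ 7 • P = 0} : ℝ) ∧
      (Set.ncard {q : ℤ × ℤ | 4 * q.1 ^ 3 + 27 * q.2 ^ 2 ≠ 0 ∧
          (∀ p : ℕ, p.Prime → (p : ℤ) ^ 4 ∣ q.1 → ¬ (p : ℤ) ^ 6 ∣ q.2) ∧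
          max ((|q.1| : ℝ) ^ 3) ((|q.2| : ℝ) ^ 2) ≤ X ^ 6 ∧
          ∃ P : (EAB q.1 q.2).Point, P ≠ 0 ∧ 7 • P = 0} : ℝ) ≤ c₂ * Real.sqrt X := by
  obtain ⟨c₁, hc₁, Z₀, hlower⟩ := exists_le_ncard_sevenTorsionCurves
  obtain ⟨c₂, hc₂, hupper⟩ := exists_ncard_sevenTorsionCurves_le
  refine ⟨c₁, c₂, hc₁, hc₂, max 1 Z₀ ^ 4, fun X hX => ?_⟩
  change c₁ * √X ≤ (sevenTorsionCurves X).ncard ∧ (sevenTorsionCurves X).ncard ≤ c₂ * √X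
  obtain ⟨Z, hZ, rfl, hsqrt⟩ := exists_pow_four_eq_of_le (le_max_of_le_left zero_le_one) hX
  obtain ⟨hfin, hcard⟩ := hupper Z ((le_max_left _ _).trans hZ)
  rw [hsqrt]
  exact ⟨hlower Z ((le_max_right _ _).trans hZ) hfin, hcard⟩
end
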